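/- arXiv:2108.06814 — 2 statements merged into one kernel-verified Lean document; each statement's English description precedes it below -/
import Mathlib

section
/- Let H and G be two finitely generated groups such that every group homomorphism from G to (ℝ,+) is trivial, every group homomorphism from the commutator subgroup [G,G] to (ℝ,+) is trivial, every group homomorphism from H to (ℝ,+) is trivial, and every group homomorphism from [H,H] to (ℝ,+) is trivial. Then for any orientation preserving C^1 action of the product group H × G on the circle, the induced action of either the factor H × 1 or the factor 1 × G factors through an action of a finite cyclic group; that is, the image of at least one of the two factors under the action homomorphism is a finite cyclic group. -/
noncomputable section

open MeasureTheory

/-- The circle `S¹ = ℝ/ℤ`. -/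
abbrev 𝕊 : Type := AddCircle (1 : ℝ)

/-- `F : ℝ → ℝ` is a lift of the circle bijection `f` witnessing that `f` is an
orientation preserving homeomorphism of the circle: `F` is a strictly increasing
homeomorphism of `ℝ` (equivalently, continuous and strictly increasing) satisfying
`F (x + 1) = F x + 1`, and projecting to `f`. -/
def IsOPLift (f : Equiv.Perm 𝕊) (F : ℝ → ℝ) : Prop :=
  Continuous F ∧ StrictMono F ∧ (∀ x : ℝ, F (x + 1) = F x + 1) ∧
    ∀ x : ℝ, f (x : 𝕊) = (F x : 𝕊)

/-- `f` is an orientation preserving homeomorphism of the circle. -/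
def IsOPHomeo (f : Equiv.Perm 𝕊) : Prop := ∃ F : ℝ → ℝ, IsOPLift f F

/-- `F` is a lift witnessing that `f` is an orientation preserving `C¹` diffeomorphism
of the circle: an orientation preserving lift which is `C¹` with nowhere vanishing
derivative. -/
def IsC1Lift (f : Equiv.Perm 𝕊) (F : ℝ → ℝ) : Prop :=
  IsOPLift f F ∧ ContDiff ℝ 1 F ∧ ∀ x : ℝ, deriv F x ≠ 0

/-- `f` is an orientation preserving `C¹` diffeomorphism of the circle, i.e. an element
of `Diff¹₊(S¹)`. -/
def IsC1Diffeo (f : Equiv.Perm 𝕊) : Prop := ∃ F : ℝ → ℝ, IsC1Lift f F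


namespace PAC

open CircleDeg1Lift Filter Topology

lemma rel_pow {X : Type*} [Group X] (R : X → X → Prop) (hr : ∀ a, R a a)
    (ht : ∀ a b c, R a b → R b c → R a c)
    (hl : ∀ a b c, R a b → R (c * a) (c * b)) (hri : ∀ a b c, R a b → R (a * c) (b * c))
    (a b : X) (h : R (a * b) (b * a)) (n : ℕ) :
    R (a ^ n * b ^ n) ((a * b) ^ n) ∧ R ((a * b) ^ n) (b ^ n * a ^ n) := by
  have h1 : ∀ n : ℕ, R (a * b ^ n) (b ^ n * a) := by
    intro n
    induction n with
    | zero => simpa using hr a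
    | succ n ih =>
      have e1 := hri _ _ b ih
      have e2 := hl _ _ (b ^ n) h
      rw [pow_succ, ← mul_assoc]
      refine ht _ _ _ e1 ?_
      simpa [mul_assoc] using e2
  have h2 : ∀ n : ℕ, R (a ^ n * b) (b * a ^ n) := by
    intro n
    induction n with
    | zero => simpa using hr b
    | succ n ih =>
      have e1 := hl _ _ a ih
      have e2 := hri _ _ (a ^ n) h
      rw [pow_succ', mul_assoc]
      refine ht _ _ _ e1 ?_
      simpa [mul_assoc] using e2
  induction n with
  | zero => simpa using hr 1
  | succ n ih =>
    constructor
    · have e1 := hl _ _ a (hri _ _ (b ^ n) (h2 n))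
      have e2 := hl _ _ (a * b) ih.1
      have : a ^ (n+1) * b ^ (n+1) = a * (a ^ n * b * b ^ n) := by
        rw [pow_succ', pow_succ']; simp [mul_assoc]
      rw [this, pow_succ' (a*b)]
      refine ht _ _ _ e1 ?_
      simpa [mul_assoc] using e2
    · have e1 := hl _ _ (a * b) ih.2
      have e2 := hri _ _ (a ^ n) (h1 (n+1))
      rw [pow_succ' (a * b)]
      refine ht _ _ _ e1 ?_
      have : b ^ (n+1) * a ^ (n+1) = b ^ (n+1) * a * a ^ n := by
        rw [pow_succ' a]; simp [mul_assoc]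
      rw [this]
      have : a * b * (b ^ n * a ^ n) = a * b ^ (n+1) * a ^ n := by
        rw [pow_succ' b]; simp [mul_assoc]
      rw [this]; exact e2

lemma cont (u : CircleDeg1Liftˣ) : Continuous u := (toOrderIso u).continuous

lemma smono (u : CircleDeg1Liftˣ) : StrictMono u := (toOrderIso u).strictMono

lemma umul (u v : CircleDeg1Liftˣ) (x : ℝ) : (u * v : CircleDeg1Liftˣ) x = u (v x) := rfl

lemma tau_nonpos_iff {Γ : Subgroup CircleDeg1Liftˣ} {x₀ : ℝ}
    (h : ∀ u ∈ Γ, (∃ x : ℝ, u x = x) → u x₀ = x₀) {u : CircleDeg1Liftˣ} (hu : u ∈ Γ) :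
    translationNumber u ≤ 0 ↔ u x₀ ≤ x₀ := by
  constructor
  · intro h0
    rcases h0.lt_or_eq with h1 | h1
    · have := map_lt_of_translationNumber_lt_int (u : CircleDeg1Lift) (n := 0) (by simpa using h1) x₀
      simpa using this.le
    · have := (translationNumber_eq_int_iff (u : CircleDeg1Lift) (cont u) (m := 0)).1 (by simpa using h1)
      exact (h u hu (by simpa using this)).le
  · intro h0
    have := translationNumber_le_of_le_add_int (u : CircleDeg1Lift) (x := x₀) (m := 0) (by simpa using h0)
    simpa using this

lemma near (f : CircleDeg1Lift) (x y : ℝ) : |f x - x - (f y - y)| ≤ 1 := by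
  have h1 := f.le_map_of_map_zero
  wlog hxy : Int.fract x ≤ Int.fract y generalizing x y
  · rw [abs_sub_comm]; exact this y x (le_of_not_ge hxy)
  rw [← f.map_fract_sub_fract_eq x, ← f.map_fract_sub_fract_eq y]
  have hx0 := Int.fract_nonneg x
  have hy1 := Int.fract_lt_one y
  have a1 := f.monotone hxy
  have a2 : f (Int.fract y) ≤ f (Int.fract x + 1) := f.monotone (by linarith)
  rw [f.map_add_one] at a2
  rw [abs_le]; constructor <;> linarith

lemma tau_mul {Γ : Subgroup CircleDeg1Liftˣ} {x₀ : ℝ}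
    (h : ∀ u ∈ Γ, (∃ x : ℝ, u x = x) → u x₀ = x₀) {a b : CircleDeg1Liftˣ} (ha : a ∈ Γ) (hb : b ∈ Γ) :
    translationNumber (a * b : CircleDeg1Liftˣ) = translationNumber a + translationNumber b := by
  let R : Γ → Γ → Prop := fun f g => f.1 x₀ ≤ g.1 x₀
  have hR : ∀ f g : Γ, R f g ↔ translationNumber ((g.1⁻¹ * f.1 : CircleDeg1Liftˣ) : CircleDeg1Lift) ≤ 0 := by
    intro f g
    rw [tau_nonpos_iff h (Γ.mul_mem (Γ.inv_mem g.2) f.2), umul]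
    show f.1 x₀ ≤ g.1 x₀ ↔ _
    rw [← (smono g.1).le_iff_le (b := x₀), units_apply_inv_apply]
  have hR' : ∀ f g : Γ, R f g ↔ translationNumber ((f.1 * g.1⁻¹ : CircleDeg1Liftˣ) : CircleDeg1Lift) ≤ 0 := by
    intro f g
    rw [hR, ← translationNumber_conj_eq g.1]
    simp
  wlog hab : R (⟨a, ha⟩ * ⟨b, hb⟩) (⟨b, hb⟩ * ⟨a, ha⟩) generalizing a b
  · have := this hb ha (le_of_not_ge hab)
    rw [add_comm, ← this, ← translationNumber_conj_eq b (a * b : CircleDeg1Liftˣ)]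
    simp [mul_assoc]
  have key := rel_pow R (fun a => le_refl _) (fun a b c => le_trans)
    (fun a b c hh => by
      show c.1 (a.1 x₀) ≤ c.1 (b.1 x₀)
      exact (smono c.1).monotone hh)
    (fun a b c hh => by
      rw [hR'] at hh ⊢
      simpa [mul_assoc] using hh) _ _ hab
  have k1 : ∀ n : ℕ, |((a * b : CircleDeg1Liftˣ) ^ n : CircleDeg1Lift) x₀ - x₀
      - (((a ^ n : CircleDeg1Lift) x₀ - x₀) + ((b ^ n : CircleDeg1Lift) x₀ - x₀))| ≤ 1 := by
    intro n
    obtain ⟨p, q⟩ := key n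
    have p' : (a ^ n : CircleDeg1Lift) ((b ^ n : CircleDeg1Lift) x₀) ≤ ((a * b : CircleDeg1Liftˣ) ^ n : CircleDeg1Lift) x₀ := by
      have : (a ^ n * b ^ n : CircleDeg1Liftˣ) x₀ ≤ ((a * b) ^ n : CircleDeg1Liftˣ) x₀ := p
      simpa only [Units.val_mul, Units.val_pow_eq_pow_val, CircleDeg1Lift.mul_apply] using this
    have q' : ((a * b : CircleDeg1Liftˣ) ^ n : CircleDeg1Lift) x₀ ≤ (b ^ n : CircleDeg1Lift) ((a ^ n : CircleDeg1Lift) x₀) := by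
      have : ((a * b) ^ n : CircleDeg1Liftˣ) x₀ ≤ (b ^ n * a ^ n : CircleDeg1Liftˣ) x₀ := q
      simpa only [Units.val_mul, Units.val_pow_eq_pow_val, CircleDeg1Lift.mul_apply] using this
    have n1 := abs_le.1 (near (a ^ n : CircleDeg1Lift) ((b ^ n : CircleDeg1Lift) x₀) x₀)
    have n2 := abs_le.1 (near (b ^ n : CircleDeg1Lift) ((a ^ n : CircleDeg1Lift) x₀) x₀)
    rw [abs_le]
    constructor <;> linarith
  have t1 := tendsto_translationNumber (a * b : CircleDeg1Liftˣ) x₀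
  have t2 := (tendsto_translationNumber a x₀).add (tendsto_translationNumber b x₀)
  have t3 := t1.sub t2
  have t4 : Tendsto (fun n : ℕ => (1:ℝ) / n) atTop (𝓝 0) := tendsto_one_div_atTop_nhds_zero_nat
  have t5 : Tendsto (fun n : ℕ => (((a * b : CircleDeg1Liftˣ) ^ n : CircleDeg1Lift) x₀ - x₀) / n
      - ((((a ^ n : CircleDeg1Lift) x₀ - x₀)) / n + (((b ^ n : CircleDeg1Lift) x₀ - x₀)) / n))
      atTop (𝓝 0) := squeeze_zero_norm (a := fun n : ℕ => (1:ℝ) / n) (fun n => by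
    rw [Real.norm_eq_abs, ← add_div, ← sub_div, abs_div, Nat.abs_cast]
    exact div_le_div_of_nonneg_right (k1 n) (Nat.cast_nonneg n)) t4
  have := tendsto_nhds_unique t3 t5
  linarith

lemma comm_fix {Γ : Subgroup CircleDeg1Liftˣ} {x₀ : ℝ}
    (h : ∀ u ∈ Γ, (∃ x : ℝ, u x = x) → u x₀ = x₀) {a b : CircleDeg1Liftˣ} (ha : a ∈ Γ) (hb : b ∈ Γ) :
    (a * b * a⁻¹ * b⁻¹ : CircleDeg1Liftˣ) x₀ = x₀ := by
  have hab := Γ.mul_mem ha hb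
  have haba := Γ.mul_mem hab (Γ.inv_mem ha)
  have hc := Γ.mul_mem haba (Γ.inv_mem hb)
  apply h _ hc
  have : translationNumber (a * b * a⁻¹ * b⁻¹ : CircleDeg1Liftˣ) = (0 : ℤ) := by
    rw [tau_mul h haba (Γ.inv_mem hb), tau_mul h hab (Γ.inv_mem ha), tau_mul h ha hb,
      translationNumber_units_inv, translationNumber_units_inv]
    push_cast
    ring
  simpa using (translationNumber_eq_int_iff _ (cont _)).1 this

end PAC

namespace PAC

open CircleDeg1Lift Filter Topology

lemma int_iso (φ : ℤ ≃o ℤ) (n : ℤ) : φ n = n + φ 0 := by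
  have h : ∀ m : ℤ, φ (m + 1) = φ m + 1 := by
    intro m
    have := φ.map_succ m
    simpa using this
  induction n using Int.induction_on with
  | zero => simp
  | succ i ih => rw [h, ih]; ring
  | pred i ih =>
    have := h (-i - 1)
    rw [sub_add_cancel, ih] at this
    linarith

lemma discrete_fix {Γ : Subgroup CircleDeg1Liftˣ} {P : Set ℝ} {δ : ℝ} (hδ : 0 < δ)
    (hne : P.Nonempty) (hper : ∀ x ∈ P, ∀ n : ℤ, x + n ∈ P)
    (hsep : ∀ x ∈ P, ∀ y ∈ P, x < y → δ ≤ y - x)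
    (hinv : ∀ u ∈ Γ, ∀ x ∈ P, u x ∈ P) :
    ∃ p : ℝ, ∀ a ∈ Γ, ∀ b ∈ Γ, (a * b * a⁻¹ * b⁻¹ : CircleDeg1Liftˣ) p = p := by
  obtain ⟨p, hp⟩ := hne
  have hfin : ∀ x y : P, (Set.Icc x y).Finite := by
    intro x y
    refine Set.Finite.of_injOn (f := fun z : P => ⌊z.1 / δ⌋)
      (t := Set.Icc ⌊x.1 / δ⌋ ⌊y.1 / δ⌋) ?_ ?_ (Set.finite_Icc _ _)
    · intro z hz
      exact ⟨Int.floor_le_floor (div_le_div_of_nonneg_right hz.1 hδ.le),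
        Int.floor_le_floor (div_le_div_of_nonneg_right hz.2 hδ.le)⟩
    · intro z _ w _ hzw
      have habs := Int.abs_sub_lt_one_of_floor_eq_floor hzw
      rw [← sub_div, abs_div, abs_of_pos hδ, div_lt_one hδ] at habs
      by_contra hne
      rcases lt_or_gt_of_ne (fun h => hne (Subtype.ext h) : z.1 ≠ w.1) with h | h
      · have := hsep _ z.2 _ w.2 h
        rw [abs_sub_comm] at habs
        have := le_abs_self (w.1 - z.1)
        linarith
      · have := hsep _ w.2 _ z.2 h
        have := le_abs_self (z.1 - w.1)
        linarith
  let _ : LocallyFiniteOrder P := LocallyFiniteOrder.ofFiniteIcc hfin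
  let _ : SuccOrder P := LinearLocallyFiniteOrder.succOrder P
  let _ : PredOrder P := LinearLocallyFiniteOrder.predOrder P
  have : NoMaxOrder P := ⟨fun x => ⟨⟨x.1 + (1:ℤ), hper _ x.2 1⟩, by
    rw [← Subtype.coe_lt_coe]; simp⟩⟩
  have : NoMinOrder P := ⟨fun x => ⟨⟨x.1 + (-1:ℤ), hper _ x.2 (-1)⟩, by
    rw [← Subtype.coe_lt_coe]; simp⟩⟩
  have : Nonempty P := ⟨⟨p, hp⟩⟩
  let e : P ≃o ℤ := orderIsoIntOfLinearSuccPredArch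
  let act : ∀ u ∈ Γ, P ≃o P := fun u hu =>
    { toFun := fun x => ⟨u x.1, hinv u hu _ x.2⟩
      invFun := fun x => ⟨(u⁻¹ : CircleDeg1Liftˣ) x.1, hinv _ (Γ.inv_mem hu) _ x.2⟩
      left_inv := fun x => Subtype.ext (units_inv_apply_apply u x.1)
      right_inv := fun x => Subtype.ext (units_apply_inv_apply u x.1)
      map_rel_iff' := by
        intro x y
        exact (smono u).le_iff_le }
  have key : ∀ u (hu : u ∈ Γ), ∃ t : ℤ, ∀ x : P, e (act u hu x) = e x + t := by
    intro u hu
    refine ⟨((e.symm.trans (act u hu)).trans e) 0, fun x => ?_⟩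
    have := int_iso ((e.symm.trans (act u hu)).trans e) (e x)
    simpa using this
  have hcomm : ∀ a ∈ Γ, ∀ b ∈ Γ, ∀ x ∈ P, a (b x) = b (a x) := by
    intro a ha b hb x hx
    obtain ⟨s, hs⟩ := key a ha
    obtain ⟨t, ht⟩ := key b hb
    have : act a ha (act b hb ⟨x, hx⟩) = act b hb (act a ha ⟨x, hx⟩) := by
      apply e.injective
      rw [hs, ht, ht, hs]; ring
    exact congrArg Subtype.val this
  refine ⟨p, fun a ha b hb => ?_⟩
  have h1 := hcomm a⁻¹ (Γ.inv_mem ha) b⁻¹ (Γ.inv_mem hb) p hp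
  rw [umul, umul, umul, h1, hcomm a ha b hb _ (hinv _ (Γ.inv_mem hb) _ (hinv _ (Γ.inv_mem ha) _ hp)),
    ← hcomm a⁻¹ (Γ.inv_mem ha) b⁻¹ (Γ.inv_mem hb) p hp, units_apply_inv_apply, units_apply_inv_apply]

lemma sep_fix {Γ : Subgroup CircleDeg1Liftˣ} {A B : Set ℝ}
    (hA : IsClosed A) (hB : IsClosed B) (hAne : A.Nonempty) (hBne : B.Nonempty)
    (hAp : ∀ x ∈ A, ∀ n : ℤ, x + n ∈ A) (hBp : ∀ x ∈ B, ∀ n : ℤ, x + n ∈ B)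
    (hAi : ∀ u ∈ Γ, ∀ x ∈ A, u x ∈ A) (hBi : ∀ u ∈ Γ, ∀ x ∈ B, u x ∈ B)
    (hd : ∀ x ∈ A, x ∉ B) :
    ∃ p : ℝ, ∀ a ∈ Γ, ∀ b ∈ Γ, (a * b * a⁻¹ * b⁻¹ : CircleDeg1Liftˣ) p = p := by
  have hAne' : (A ∩ Set.Icc 0 1).Nonempty := by
    obtain ⟨x, hx⟩ := hAne
    refine ⟨x + (-⌊x⌋ : ℤ), hAp x hx _, ?_⟩
    have h1 := Int.fract_nonneg x
    have h2 := (Int.fract_lt_one x).le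
    rw [Int.fract] at h1 h2
    push_cast
    exact ⟨by linarith, by linarith⟩
  obtain ⟨m, hm, hmin⟩ := (isCompact_Icc.inter_left hA).exists_isMinOn hAne'
    (Metric.continuous_infDist_pt B).continuousOn
  have hδ : 0 < Metric.infDist m B := (hB.notMem_iff_infDist_pos hBne).1 (hd m hm.1)
  have hdist : ∀ x ∈ A, ∀ y ∈ B, x < y → Metric.infDist m B ≤ y - x := by
    intro x hx y hy hxy
    have h1 := Int.fract_nonneg x
    have h2 := (Int.fract_lt_one x).le
    rw [Int.fract] at h1 h2
    have h3 := hmin (a := x + (-⌊x⌋ : ℤ)) ⟨hAp x hx _, by push_cast; exact ⟨by linarith, by linarith⟩⟩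
    have h4 := Metric.infDist_le_dist_of_mem (x := x + (-⌊x⌋ : ℤ)) (hBp y hy (-⌊x⌋))
    have h5 : dist (x + ((-⌊x⌋ : ℤ) : ℝ)) (y + ((-⌊x⌋ : ℤ) : ℝ)) = y - x := by
      rw [dist_add_right, dist_comm, Real.dist_eq, abs_of_pos (by linarith)]
    rw [h5] at h4
    exact le_trans h3 h4
  refine discrete_fix (P := {p | p ∈ A ∧ ∃ n ∈ B, p < n ∧ ∀ z ∈ A, p < z → n ≤ z}) hδ ?_ ?_ ?_ ?_
  · obtain ⟨n, hn⟩ := hBne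
    have hS : (A ∩ Set.Iic n).Nonempty := by
      obtain ⟨x, hx⟩ := hAne
      refine ⟨x + (-⌈x - n⌉ : ℤ), hAp x hx _, ?_⟩
      have := Int.le_ceil (x - n)
      push_cast
      rw [Set.mem_Iic]
      linarith
    have hbd : BddAbove (A ∩ Set.Iic n) := ⟨n, fun z hz => hz.2⟩
    have hs := (hA.inter isClosed_Iic).csSup_mem hS hbd
    refine ⟨_, hs.1, n, hn, lt_of_le_of_ne hs.2 (fun h => hd _ hs.1 (by rw [h]; exact hn)), ?_⟩
    intro z hz hlt
    by_contra hcon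
    exact absurd (le_csSup hbd ⟨hz, (not_le.1 hcon).le⟩) (not_le.2 hlt)
  · rintro x ⟨hx, n, hn, hxn, hh⟩ k
    refine ⟨hAp x hx k, n + k, hBp n hn k, by linarith, fun z hz hlt => ?_⟩
    have := hh (z + (-k : ℤ)) (hAp z hz _) (by push_cast; linarith)
    push_cast at this
    linarith
  · rintro x ⟨hx, n, hn, hxn, hh⟩ y ⟨hy, -⟩ hxy
    have := hh y hy hxy
    have := hdist x hx n hn hxn
    linarith
  · rintro u hu x ⟨hx, n, hn, hxn, hh⟩
    refine ⟨hAi u hu x hx, u n, hBi u hu n hn, smono u hxn, fun z hz hlt => ?_⟩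
    have := hh ((u⁻¹ : CircleDeg1Liftˣ) z) (hAi _ (Γ.inv_mem hu) z hz) (by
      rw [← (smono u).lt_iff_lt, units_apply_inv_apply]; exact hlt)
    rw [← (smono u).le_iff_le, units_apply_inv_apply] at this
    exact this

/-- Main dichotomy for two commuting groups of lifts. -/
lemma dichotomy (Γ Λ : Subgroup CircleDeg1Liftˣ) (hc : ∀ u ∈ Γ, ∀ v ∈ Λ, u * v = v * u) :
    (∃ p : ℝ, ∀ a ∈ Γ, ∀ b ∈ Γ, (a * b * a⁻¹ * b⁻¹ : CircleDeg1Liftˣ) p = p) ∨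
    (∃ p : ℝ, ∀ a ∈ Λ, ∀ b ∈ Λ, (a * b * a⁻¹ * b⁻¹ : CircleDeg1Liftˣ) p = p) := by
  by_cases hΓ : ∃ p : ℝ, ∀ a ∈ Γ, ∀ b ∈ Γ, (a * b * a⁻¹ * b⁻¹ : CircleDeg1Liftˣ) p = p
  · exact Or.inl hΓ
  right
  let ι := {v : CircleDeg1Liftˣ // v ∈ Λ ∧ ∃ x : ℝ, v x = x}
  let F : ι → Set ℝ := fun v => {x | v.1 x = x}
  have hF : ∀ v, IsClosed (F v) := fun v => isClosed_eq (cont v.1) continuous_id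
  have hFp : ∀ v, ∀ x ∈ F v, ∀ n : ℤ, x + n ∈ F v := by
    intro v x hx n
    show v.1 (x + n) = x + n
    rw [map_add_int, show v.1 x = x from hx]
  have hFi : ∀ v, ∀ u ∈ Γ, ∀ x ∈ F v, u x ∈ F v := by
    intro v u hu x hx
    show v.1 (u x) = u x
    rw [← umul, ← hc u hu v.1 v.2.1, umul, show v.1 x = x from hx]
  have hfip : ∀ s : Finset ι, (⋂ i ∈ s, F i).Nonempty := by
    classical
    intro s
    induction s using Finset.induction_on with
    | empty => simp
    | insert v s hv ih =>
      by_contra hcon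
      apply hΓ
      refine sep_fix (A := F v) (B := ⋂ i ∈ s, F i) (hF v)
        (isClosed_biInter fun i _ => hF i) v.2.2 ih (hFp v) ?_ (hFi v) ?_ ?_
      · intro x hx n
        simp only [Set.mem_iInter] at hx ⊢
        exact fun i hi => hFp i x (hx i hi) n
      · intro u hu x hx
        simp only [Set.mem_iInter] at hx ⊢
        exact fun i hi => hFi i u hu x (hx i hi)
      · intro x hx hx'
        apply hcon
        rw [Finset.set_biInter_insert]
        exact ⟨x, hx, hx'⟩
  obtain ⟨x₀, -, hx₀⟩ := (isCompact_Icc (a := (0:ℝ)) (b := 1)).inter_iInter_nonempty F hF (by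
    intro s
    obtain ⟨x, hx⟩ := hfip s
    refine ⟨x + (-⌊x⌋ : ℤ), ?_, ?_⟩
    · have h1 := Int.fract_nonneg x
      have h2 := (Int.fract_lt_one x).le
      rw [Int.fract] at h1 h2
      push_cast
      exact ⟨by linarith, by linarith⟩
    · simp only [Set.mem_iInter] at hx ⊢
      exact fun i hi => hFp i x (hx i hi) _)
  refine ⟨x₀, fun a ha b hb => comm_fix (Γ := Λ) ?_ ha hb⟩
  intro u hu hex
  exact Set.mem_iInter.1 hx₀ ⟨u, hu, hex⟩

end PAC

namespace PAC

open Filter Topology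

/-- Thurston stability. -/
lemma thurston {L : Type*} [Group L] [Group.FG L] (hL : ∀ φ : L →* Multiplicative ℝ, φ = 1)
    (A : L → ℝ → ℝ) (h1 : ∀ x, A 1 x = x) (hmul : ∀ g h x, A (g * h) x = A g (A h x))
    (hC : ∀ g, ContDiff ℝ 1 (A g)) (hm : ∀ g, StrictMono (A g)) (p : ℝ) (hp : ∀ g, A g p = p) :
    ∀ g x, A g x = x := by
  classical
  let Z : Set ℝ := {x | ∀ g, A g x = x}
  have hcl : IsClosed Z := by
    have : Z = ⋂ g, {x | A g x = x} := by ext x; simp [Z]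
    rw [this]
    exact isClosed_iInter fun g => isClosed_eq (hC g).continuous continuous_id
  suffices hop : IsOpen Z by
    have : Z = Set.univ := IsClopen.eq_univ ⟨hcl, hop⟩ ⟨p, hp⟩
    intro g x
    have hx : x ∈ Z := this ▸ Set.mem_univ x
    exact hx g
  rw [isOpen_iff_mem_nhds]
  intro x₀ hx₀
  by_contra hcon
  have hne : (𝓝 x₀ ⊓ 𝓟 Zᶜ).NeBot := by
    rw [neBot_iff]
    intro hb
    apply hcon
    rw [inf_principal_eq_bot, compl_compl] at hb
    exact hb
  let U : Ultrafilter ℝ := Ultrafilter.of (𝓝 x₀ ⊓ 𝓟 Zᶜ)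
  have hU1 : (U : Filter ℝ) ≤ 𝓝 x₀ := (Ultrafilter.of_le _).trans inf_le_left
  have hU2 : ∀ᶠ x in (U : Filter ℝ), x ∉ Z := by
    have : (U : Filter ℝ) ≤ 𝓟 Zᶜ := (Ultrafilter.of_le _).trans inf_le_right
    exact le_principal_iff.1 this
  -- derivative is one
  have hdiff : ∀ g x, DifferentiableAt ℝ (A g) x := fun g x => ((hC g).differentiable (by simp)) x
  have hdm : ∀ g h, deriv (A (g * h)) x₀ = deriv (A g) x₀ * deriv (A h) x₀ := by
    intro g h
    have e : A (g * h) = A g ∘ A h := funext fun x => hmul g h x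
    rw [e, deriv_comp _ (hdiff _ _) (hdiff _ _), hx₀ h]
  have hd1 : deriv (A 1) x₀ = 1 := by
    have e : A 1 = id := funext h1
    rw [e, deriv_id]
  have hdne : ∀ g, deriv (A g) x₀ ≠ 0 := by
    intro g h0
    have := hdm g g⁻¹
    rw [mul_inv_cancel, hd1, h0, zero_mul] at this
    exact one_ne_zero this
  have hdnn : ∀ g, 0 ≤ deriv (A g) x₀ := fun g => (hm g).monotone.deriv_nonneg
  have hd : ∀ g, deriv (A g) x₀ = 1 := by
    let φ : L →* Multiplicative ℝ :=
      { toFun := fun g => Multiplicative.ofAdd (Real.log (deriv (A g) x₀))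
        map_one' := by rw [hd1, Real.log_one]; rfl
        map_mul' := fun g h => by
          rw [hdm, Real.log_mul (hdne g) (hdne h)]; rfl }
    intro g
    have : φ g = 1 := by rw [hL φ]; rfl
    have h2 : Real.log (deriv (A g) x₀) = 0 := this
    exact Real.eq_one_of_pos_of_log_eq_zero (lt_of_le_of_ne (hdnn g) (hdne g).symm) h2
  -- estimate
  have hest : ∀ g h, ∀ ε > 0, ∀ᶠ x in 𝓝 x₀,
      |A g (A h x) - A h x - (A g x - x)| ≤ ε * |A h x - x| := by
    intro g h ε hε
    have hs : HasStrictDerivAt (A g) 1 x₀ := by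
      have := (hC g).contDiffAt.hasStrictDerivAt (x := x₀) (by simp)
      rwa [hd g] at this
    have hs' := (hasStrictDerivAt_iff_hasStrictFDerivAt.1 hs).isLittleO.def hε
    have ht : Tendsto (fun x => (A h x, x)) (𝓝 x₀) (𝓝 (x₀, x₀)) := by
      have : Tendsto (A h) (𝓝 x₀) (𝓝 x₀) := by
        have := (hC h).continuous.tendsto x₀
        rwa [hx₀ h] at this
      rw [nhds_prod_eq]
      exact this.prodMk tendsto_id
    filter_upwards [ht.eventually hs'] with x hx
    simp only [Real.norm_eq_abs] at hx
    convert hx using 2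
    simp
    ring
  obtain ⟨S, hS⟩ := Group.FG.out (G := L)
  let E : ℝ → ℝ := fun x => ∑ s ∈ S, |A s x - x|
  have hE0 : ∀ x, 0 ≤ E x := fun x => Finset.sum_nonneg fun s _ => abs_nonneg _
  have hfix : ∀ x, E x = 0 → x ∈ Z := by
    intro x hx
    have h2 : ∀ s ∈ S, A s x = x := by
      intro s hs
      have := (Finset.sum_eq_zero_iff_of_nonneg (fun s _ => abs_nonneg _)).1 hx s hs
      rw [abs_eq_zero] at this; linarith
    let T : Subgroup L :=
      { carrier := {g | A g x = x}
        one_mem' := h1 x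
        mul_mem' := fun {a b} ha hb => by
          show A (a * b) x = x
          rw [hmul, show A b x = x from hb]; exact ha
        inv_mem' := fun {a} ha => by
          show A a⁻¹ x = x
          have h3 : A (a⁻¹ * a) x = x := by rw [inv_mul_cancel]; exact h1 x
          rw [hmul, show A a x = x from ha] at h3
          exact h3 }
    have hT : (⊤ : Subgroup L) ≤ T := by
      rw [← hS, Subgroup.closure_le]
      exact fun s hs => h2 s hs
    exact fun g => hT (Subgroup.mem_top g)
  have hEpos : ∀ᶠ x in (U : Filter ℝ), 0 < E x := by
    filter_upwards [hU2] with x hx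
    exact lt_of_le_of_ne (hE0 x) fun h => hx (hfix x h.symm)
  -- boundedness
  have hbd : ∀ g, ∃ C : ℝ, ∀ᶠ x in (U : Filter ℝ), |A g x - x| ≤ C * E x := by
    let T : Subgroup L :=
      { carrier := {g | ∃ C : ℝ, ∀ᶠ x in (U : Filter ℝ), |A g x - x| ≤ C * E x}
        one_mem' := ⟨0, by simp [h1]⟩
        mul_mem' := fun {a b} ha hb => by
          obtain ⟨C, hC⟩ := ha
          obtain ⟨D, hD⟩ := hb
          refine ⟨C + 2 * D, ?_⟩
          filter_upwards [hC, hD, hU1 (hest a b 1 one_pos)] with x p q r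
          rw [hmul]
          have : A a (A b x) - x =
            (A a (A b x) - A b x - (A a x - x)) + (A a x - x) + (A b x - x) := by ring
          rw [this]
          refine (abs_add_three _ _ _).trans ?_
          linarith
        inv_mem' := fun {a} ha => by
          obtain ⟨C, hC⟩ := ha
          refine ⟨2 * C, ?_⟩
          filter_upwards [hC, hU1 (hest a a⁻¹ (1/2) (by norm_num))] with x p q
          rw [← hmul, mul_inv_cancel, h1] at q
          have : A a⁻¹ x - x = -(x - A a⁻¹ x - (A a x - x)) - (A a x - x) := by ring
          have h3 : |A a⁻¹ x - x| ≤ |x - A a⁻¹ x - (A a x - x)| + |A a x - x| := by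
            conv_lhs => rw [this]
            refine (abs_sub _ _).trans ?_
            rw [abs_neg]
          linarith }
    have hT : (⊤ : Subgroup L) ≤ T := by
      rw [← hS, Subgroup.closure_le]
      intro s hs
      refine ⟨1, Eventually.of_forall fun x => ?_⟩
      rw [one_mul]
      exact Finset.single_le_sum (f := fun s => |A s x - x|) (fun s _ => abs_nonneg _) hs
    exact fun g => hT (Subgroup.mem_top g)
  have hlim : ∀ g, ∃ t : ℝ, Tendsto (fun x => (A g x - x) / E x) U (𝓝 t) := by
    intro g
    obtain ⟨C, hC⟩ := hbd g
    obtain ⟨t, -, ht⟩ := (isCompact_Icc (a := -C) (b := C)).ultrafilter_le_nhds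
      (U.map fun x => (A g x - x) / E x) (by
        rw [le_principal_iff]
        show ∀ᶠ x in (U : Filter ℝ), (A g x - x) / E x ∈ Set.Icc (-C) C
        filter_upwards [hC, hEpos] with x p q
        rw [Set.mem_Icc, ← abs_le, abs_div, abs_of_pos q, div_le_iff₀ q]
        exact p)
    exact ⟨t, ht⟩
  choose ψ hψ using hlim
  have hψm : ∀ g h, ψ (g * h) = ψ g + ψ h := by
    intro g h
    have t1 := (hψ (g * h)).sub ((hψ g).add (hψ h))
    obtain ⟨C, hC⟩ := hbd h
    have t2 : Tendsto (fun x => (A (g * h) x - x) / E x - ((A g x - x) / E x + (A h x - x) / E x))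
        U (𝓝 0) := by
      rw [Metric.tendsto_nhds]
      intro ε hε
      filter_upwards [hC, hEpos, hU1 (hest g h (ε / (2 * (|C| + 1))) (by positivity))] with x p q r
      rw [Real.dist_eq, sub_zero, ← add_div, ← sub_div, abs_div, abs_of_pos q, div_lt_iff₀ q, hmul]
      have e : A g (A h x) - x - (A g x - x + (A h x - x)) =
        A g (A h x) - A h x - (A g x - x) := by ring
      rw [e]
      refine lt_of_le_of_lt r ?_
      have h4 : |A h x - x| ≤ (|C| + 1) * E x := p.trans (by
        have := le_abs_self C
        gcongr
        linarith)
      calc ε / (2 * (|C| + 1)) * |A h x - x| ≤ ε / (2 * (|C| + 1)) * ((|C| + 1) * E x) := by gcongr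
        _ = ε / 2 * E x := by field_simp
        _ < ε * E x := by
          apply mul_lt_mul_of_pos_right _ q
          linarith
    have := tendsto_nhds_unique t1 t2
    linarith
  let φ : L →* Multiplicative ℝ := MonoidHom.mk' (fun g => Multiplicative.ofAdd (ψ g))
    (fun g h => by rw [hψm]; rfl)
  have hψ0 : ∀ g, ψ g = 0 := by
    intro g
    have : φ g = 1 := by rw [hL φ]; rfl
    exact this
  have t1 : Tendsto (fun x => ∑ s ∈ S, |(A s x - x) / E x|) U (𝓝 (∑ s ∈ S, |ψ s|)) :=
    tendsto_finsetSum _ fun s _ => (hψ s).abs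
  have t2 : Tendsto (fun x => ∑ s ∈ S, |(A s x - x) / E x|) U (𝓝 1) := by
    refine tendsto_const_nhds.congr' ?_
    filter_upwards [hEpos] with x q
    simp_rw [abs_div, abs_of_pos q]
    rw [← Finset.sum_div]
    exact (div_self q.ne').symm
  have := tendsto_nhds_unique t1 t2
  simp [hψ0] at this

end PAC

namespace PAC

open CircleDeg1Lift Filter Topology DirectSum
open scoped commutatorElement

lemma finite_ab {G : Type*} [Group G] [Group.FG G] (hG : ∀ φ : G →* Multiplicative ℝ, φ = 1) :
    Finite (Abelianization G) := by
  have : Group.FG (Abelianization G) :=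
    Group.fg_of_surjective (f := Abelianization.of) (QuotientGroup.mk'_surjective _)
  obtain ⟨n, ι, _, p, hp, e, ⟨f⟩⟩ :=
    AddCommGroup.equiv_free_prod_directSum_zmod (Additive (Abelianization G))
  rcases n with - | n
  · have : ∀ i, NeZero (p i ^ e i) := fun i => ⟨pow_ne_zero _ (hp i).ne_zero⟩
    have : Finite (⨁ i : ι, ZMod (p i ^ e i)) := by
      classical
      exact Finite.of_equiv _ (DFinsupp.equivFunOnFintype (β := fun i => ZMod (p i ^ e i))).symm
    have : Finite (Fin 0 →₀ ℤ) := Finite.of_subsingleton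
    exact Finite.of_equiv _ (f.symm.toEquiv.trans Additive.toMul)
  · exfalso
    let φ : G →* Multiplicative ℝ := MonoidHom.mk'
      (fun g => Multiplicative.ofAdd (((f (Additive.ofMul (Abelianization.of g))).1 0 : ℤ) : ℝ))
      (fun g h => by
        rw [map_mul, ofMul_mul, map_add, Prod.fst_add, Finsupp.add_apply, Int.cast_add]; rfl)
    obtain ⟨g, hg⟩ : ∃ g : G, Abelianization.of g =
        (f.symm (Finsupp.single 0 1, 0)).toMul := QuotientGroup.mk'_surjective _ _
    have h1 : φ g = 1 := by rw [hG φ]; rfl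
    have h2 : (((f (Additive.ofMul (Abelianization.of g))).1 0 : ℤ) : ℝ) = 0 := h1
    rw [hg] at h2
    simp at h2

def IsL (f : Equiv.Perm 𝕊) (u : CircleDeg1Liftˣ) : Prop := ∀ x : ℝ, f (x : 𝕊) = (u x : 𝕊)

lemma exists_lift {f : Equiv.Perm 𝕊} {F : ℝ → ℝ} (h : IsOPLift f F) :
    ∃ u : CircleDeg1Liftˣ, IsL f u ∧ ∀ x, u x = F x := by
  obtain ⟨hc, hm, h1, hp⟩ := h
  let F' : CircleDeg1Lift := ⟨⟨F, hm.monotone⟩, h1⟩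
  have hb : Function.Bijective F' :=
    ⟨hm.injective, (continuous_iff_surjective F').1 hc⟩
  obtain ⟨u, hu⟩ := isUnit_iff_bijective.2 hb
  have : ∀ x, u x = F x := fun x => by rw [hu]; rfl
  exact ⟨u, fun x => by rw [hp, this], this⟩

lemma coe_eq_iff {x y : ℝ} : (x : 𝕊) = (y : 𝕊) ↔ ∃ k : ℤ, x = y + k := by
  rw [eq_comm, ← sub_eq_zero, ← AddCircle.coe_sub, AddCircle.coe_eq_zero_iff]
  constructor
  · rintro ⟨k, hk⟩
    exact ⟨-k, by simp at hk ⊢; linarith⟩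
  · rintro ⟨k, hk⟩
    exact ⟨-k, by simp; linarith⟩

lemma id_lift {w : CircleDeg1Liftˣ} (h : IsL 1 w) : ∃ k : ℤ, ∀ x, w x = x + k := by
  have h' : ∀ x : ℝ, ∃ k : ℤ, w x = x + k := fun x => coe_eq_iff.1 (h x).symm
  choose k hk using h'
  refine ⟨k 0, fun x => ?_⟩
  have h1 := map_fract_sub_fract_eq (w : CircleDeg1Lift) x
  have h2 : w (Int.fract x) = Int.fract x + k 0 := by
    have f0 := Int.fract_nonneg x
    have f1 := Int.fract_lt_one x
    rcases f0.eq_or_lt with h0 | h0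
    · rw [← h0]; exact hk 0
    · have a1 := smono w h0
      have a2 : w (Int.fract x) < w (0 + 1) := smono w (by linarith)
      rw [map_add_one] at a2
      rw [hk 0] at a1 a2
      rw [hk (Int.fract x)] at a1 a2 ⊢
      have b1 : ((k 0 : ℤ) : ℝ) < k (Int.fract x) + 1 := by linarith
      have b2 : ((k (Int.fract x) : ℤ) : ℝ) < k 0 + 1 := by linarith
      have c1 : k 0 < k (Int.fract x) + 1 := by exact_mod_cast b1
      have c2 : k (Int.fract x) < k 0 + 1 := by exact_mod_cast b2
      have : k (Int.fract x) = k 0 := by omega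
      rw [this]
  rw [h2] at h1
  linarith

lemma IsL.mul {f g u v} (h : IsL f u) (h' : IsL g v) : IsL (f * g) (u * v) := fun x => by
  rw [Equiv.Perm.mul_apply, h', h, umul]

lemma IsL.inv {f u} (h : IsL f u) : IsL f⁻¹ u⁻¹ := fun x => by
  rw [Equiv.Perm.inv_eq_iff_eq, h, units_apply_inv_apply]

lemma IsL.one : IsL 1 1 := fun _ => rfl

lemma lift_unique {f u v} (h : IsL f u) (h' : IsL f v) : ∃ k : ℤ, ∀ x, u x = v x + k := by
  have := h.mul h'.inv
  rw [mul_inv_cancel] at this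
  obtain ⟨k, hk⟩ := id_lift this
  refine ⟨k, fun x => ?_⟩
  have := hk (v x)
  rwa [umul, units_inv_apply_apply] at this

lemma tau_add_int {u v : CircleDeg1Liftˣ} {k : ℤ} (h : ∀ x, u x = v x + k) :
    translationNumber u = translationNumber v + k := by
  have e : (u : CircleDeg1Lift) = v * (translate (Multiplicative.ofAdd (k : ℝ)) : CircleDeg1Liftˣ) := by
    ext x
    rw [h, CircleDeg1Lift.mul_apply, translate_apply, map_int_add, add_comm]
  rw [e, translationNumber_mul_of_commute, translationNumber_translate]
  ext x
  simp only [CircleDeg1Lift.mul_apply, translate_apply, map_int_add]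

lemma lift_comm {f g u v} (h : IsL f u) (h' : IsL g v) (hc : f * g = g * f) : u * v = v * u := by
  have h1 := h.mul h'
  rw [hc] at h1
  obtain ⟨k, hk⟩ := lift_unique h1 (h'.mul h)
  have h2 := tau_add_int hk
  have h3 : translationNumber (u * v : CircleDeg1Liftˣ) = translationNumber (v * u : CircleDeg1Liftˣ) := by
    rw [← translationNumber_conj_eq u (v * u : CircleDeg1Liftˣ)]
    simp [mul_assoc]
  have h4 : (k : ℝ) = 0 := by linarith
  ext x
  rw [hk, h4, add_zero]

def Lifts {G : Type*} [Group G] (ρ : G →* Equiv.Perm 𝕊) : Subgroup CircleDeg1Liftˣ where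
  carrier := {u | ∃ g, IsL (ρ g) u}
  one_mem' := ⟨1, by rw [map_one]; exact IsL.one⟩
  mul_mem' := by
    rintro a b ⟨g, hg⟩ ⟨h, hh⟩
    exact ⟨g * h, by rw [map_mul]; exact hg.mul hh⟩
  inv_mem' := by
    rintro a ⟨g, hg⟩
    exact ⟨g⁻¹, by rw [map_inv]; exact hg.inv⟩

lemma comm_fix_point {G : Type*} [Group G] (ρ : G →* Equiv.Perm 𝕊)
    (hl : ∀ g, ∃ u, IsL (ρ g) u) (p : ℝ)
    (h : ∀ a ∈ Lifts ρ, ∀ b ∈ Lifts ρ, (a * b * a⁻¹ * b⁻¹ : CircleDeg1Liftˣ) p = p) :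
    ∀ g ∈ commutator G, ρ g (p : 𝕊) = p := by
  let T : Subgroup G := (MulAction.stabilizer (Equiv.Perm 𝕊) (p : 𝕊)).comap ρ
  have hT : commutator G ≤ T := by
    rw [commutator_def, Subgroup.commutator_le]
    intro g _ k _
    obtain ⟨a, ha⟩ := hl g
    obtain ⟨b, hb⟩ := hl k
    show ρ ⁅g, k⁆ (p : 𝕊) = p
    have := ((ha.mul hb).mul ha.inv).mul hb.inv p
    rw [h a ⟨g, ha⟩ b ⟨k, hb⟩] at this
    rw [commutatorElement_def, map_mul, map_mul, map_mul, map_inv, map_inv]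
    exact this
  exact fun g hg => hT hg

/-- the commutator subgroup acts trivially as soon as it has a fixed point. -/
lemma comm_trivial {L : Type*} [Group L] [Group.FG L] (hL : ∀ φ : L →* Multiplicative ℝ, φ = 1)
    (ρ : L →* Equiv.Perm 𝕊) (hρ : ∀ g, IsC1Diffeo (ρ g)) (p : ℝ) (hp : ∀ g, ρ g (p : 𝕊) = p) :
    ∀ g, ρ g = 1 := by
  have hl : ∀ g, ∃ u : CircleDeg1Liftˣ, IsL (ρ g) u ∧ u p = p ∧ ContDiff ℝ 1 u := by
    intro g
    obtain ⟨F, hF, hC, -⟩ := hρ g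
    obtain ⟨u, hu, huF⟩ := exists_lift hF
    have h1 : (u p : 𝕊) = p := by rw [← hu, hp]
    obtain ⟨k, hk⟩ := coe_eq_iff.1 h1
    have hv : ∀ x, (u * translate (Multiplicative.ofAdd (-k : ℝ)) : CircleDeg1Liftˣ) x = u x - k := by
      intro x
      rw [umul, translate_apply, neg_add_eq_sub, map_sub_int]
    refine ⟨u * translate (Multiplicative.ofAdd (-k : ℝ)), ?_, ?_, ?_⟩
    · intro x
      rw [hu, hv]
      exact coe_eq_iff.2 ⟨k, by ring⟩
    · rw [hv, hk]; ring
    · have : ⇑((u * translate (Multiplicative.ofAdd (-k : ℝ)) : CircleDeg1Liftˣ) : CircleDeg1Lift)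
          = fun x => F x - k := funext fun x => by rw [hv, huF]
      rw [this]
      exact hC.sub contDiff_const
  choose A hA hAp hAC using hl
  have huniq : ∀ (f : Equiv.Perm 𝕊) (u v : CircleDeg1Liftˣ), IsL f u → IsL f v → u p = p → v p = p →
      ∀ x, u x = v x := by
    intro f u v hu hv h1 h2 x
    obtain ⟨k, hk⟩ := lift_unique hu hv
    have := hk p
    rw [h1, h2] at this
    rw [hk x]; linarith
  have key := thurston hL (fun g => A g)
    (fun x => by
      have := huniq 1 (A 1) 1 (by have := hA 1; rwa [map_one] at this) IsL.one (hAp 1) rfl x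
      exact this)
    (fun g h x => by
      have := huniq (ρ (g * h)) (A (g * h)) (A g * A h) (hA _)
        (by rw [map_mul]; exact (hA g).mul (hA h)) (hAp _) (by rw [umul, hAp, hAp]) x
      exact this)
    hAC (fun g => smono (A g)) p hAp
  intro g
  ext x
  induction x using QuotientAddGroup.induction_on with
  | H x =>
    have := hA g x
    rw [key g x] at this
    exact this

lemma cyclic_of_finite_comm (R : Subgroup (Equiv.Perm 𝕊)) [Finite R]
    (hc : ∀ a ∈ R, ∀ b ∈ R, a * b = b * a) (hl : ∀ a ∈ R, ∃ u, IsL a u) : IsCyclic R := by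
  have hl' : ∀ a : R, ∃ u, IsL a.1 u := fun a => hl a.1 a.2
  choose u hu using hl'
  let E : ℝ → ℂ := fun t => (AddCircle.toCircle (t : 𝕊) : ℂ)
  have hEadd : ∀ s t, E (s + t) = E s * E t := by
    intro s t
    simp [E, AddCircle.toCircle_add]
  have hEint : ∀ k : ℤ, E k = 1 := by
    intro k
    have : ((k : ℝ) : 𝕊) = 0 := by
      have := (coe_eq_iff (x := (k:ℝ)) (y := 0)).2 ⟨k, by simp⟩
      simpa using this
    simp only [E]
    rw [this]; simp
  have hE1 : ∀ t, E t = 1 → ∃ k : ℤ, t = k := by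
    intro t ht
    have h1 : AddCircle.toCircle (t : 𝕊) = AddCircle.toCircle ((0 : ℝ) : 𝕊) := by
      apply Subtype.ext
      simpa [E] using ht
    have := AddCircle.injective_toCircle one_ne_zero h1
    obtain ⟨k, hk⟩ := coe_eq_iff.1 this
    exact ⟨k, by simpa using hk⟩
  have hmul : ∀ a b : R, E (translationNumber (u (a * b))) =
      E (translationNumber (u a)) * E (translationNumber (u b)) := by
    intro a b
    obtain ⟨k, hk⟩ := lift_unique (hu (a * b)) ((hu a).mul (hu b))
    rw [tau_add_int hk, Units.val_mul, translationNumber_mul_of_commute, hEadd, hEadd, hEint, mul_one]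
    have := lift_comm (hu a) (hu b) (hc _ a.2 _ b.2)
    exact congrArg Units.val this
  have hone : E (translationNumber (u 1)) = 1 := by
    obtain ⟨k, hk⟩ := lift_unique (hu 1) IsL.one
    rw [tau_add_int hk, Units.val_one, translationNumber_one, zero_add, hEint]
  let φ : R →* ℂ :=
    { toFun := fun a => E (translationNumber (u a))
      map_one' := hone
      map_mul' := hmul }
  refine isCyclic_of_injective_ringHom φ ?_
  have hker : ∀ a : R, φ a = 1 → a = 1 := by
    intro a ha
    obtain ⟨k, hk⟩ := hE1 _ ha
    obtain ⟨x, hx⟩ := (translationNumber_eq_int_iff _ (cont (u a))).1 hk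
    obtain ⟨n, hn, hpow⟩ := isOfFinOrder_iff_pow_eq_one.1 (isOfFinOrder_of_finite a)
    have hp : ∀ m : ℕ, IsL (a.1 ^ m) (u a ^ m) := by
      intro m
      induction m with
      | zero => simpa using IsL.one
      | succ m ih => rw [pow_succ, pow_succ]; exact ih.mul (hu a)
    have h1 := hp n
    rw [show a.1 ^ n = 1 from by exact_mod_cast congrArg Subtype.val hpow] at h1
    obtain ⟨j, hj⟩ := id_lift h1
    have hj' : ∀ y, (u a)^[n] y = y + j := by
      intro y
      have := hj y
      rwa [Units.val_pow_eq_pow_val, coe_pow] at this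
    have h2 := iterate_eq_of_map_eq_add_int _ hx n
    rw [hj'] at h2
    have h3 : (j : ℝ) = n * k := by linarith
    apply Subtype.ext
    ext y
    induction y using QuotientAddGroup.induction_on with
    | H y =>
      have h4 := (iterate_pos_eq_iff (u a : CircleDeg1Lift) (x := y) (m := k) hn).1 (by rw [hj', h3])
      have := hu a y
      rw [h4] at this
      refine this.trans ?_
      exact coe_eq_iff.2 ⟨k, rfl⟩
  exact (injective_iff_map_eq_one φ).2 hker

lemma conclusion {G : Type*} [Group G] [Group.FG G]
    (hG : ∀ φ : G →* Multiplicative ℝ, φ = 1)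
    (hG' : ∀ φ : ↥(commutator G) →* Multiplicative ℝ, φ = 1)
    (ρ : G →* Equiv.Perm 𝕊) (hρ : ∀ g, IsC1Diffeo (ρ g)) (p : ℝ)
    (hp : ∀ a ∈ Lifts ρ, ∀ b ∈ Lifts ρ, (a * b * a⁻¹ * b⁻¹ : CircleDeg1Liftˣ) p = p) :
    Finite ρ.range ∧ IsCyclic ρ.range := by
  have hl : ∀ g, ∃ u, IsL (ρ g) u := fun g => by
    obtain ⟨F, hF, -⟩ := hρ g
    obtain ⟨u, hu, -⟩ := exists_lift hF
    exact ⟨u, hu⟩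
  have hfix := comm_fix_point ρ hl p hp
  have : Finite (Abelianization G) := finite_ab hG
  have : Finite (G ⧸ commutator G) := ‹Finite (Abelianization G)›
  have : (commutator G).FiniteIndex := Subgroup.finiteIndex_of_finite_quotient
  have htriv := comm_trivial hG' (ρ.comp (commutator G).subtype) (fun g => hρ _) p
    (fun g => hfix g.1 g.2)
  have hker : commutator G ≤ ρ.ker := fun g hg => htriv ⟨g, hg⟩
  have hcomm : ∀ a ∈ ρ.range, ∀ b ∈ ρ.range, a * b = b * a := by
    rintro _ ⟨g, rfl⟩ _ ⟨h, rfl⟩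
    have h1 : ⁅g, h⁆ ∈ commutator G :=
      Subgroup.commutator_mem_commutator (Subgroup.mem_top g) (Subgroup.mem_top h)
    have h2 : ρ ⁅g, h⁆ = 1 := hker h1
    rw [map_commutatorElement, commutatorElement_eq_one_iff_mul_comm] at h2
    exact h2
  have hfin : Finite ρ.range := by
    let q : G ⧸ commutator G →* Equiv.Perm 𝕊 := QuotientGroup.lift (commutator G) ρ hker
    have : (ρ.range : Set (Equiv.Perm 𝕊)) ⊆ Set.range q := by
      rintro _ ⟨g, rfl⟩
      exact ⟨(g : G ⧸ commutator G), rfl⟩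
    exact ((Set.finite_range q).subset this).to_subtype
  refine ⟨hfin, cyclic_of_finite_comm _ hcomm ?_⟩
  rintro _ ⟨g, rfl⟩
  exact hl g

end PAC

/-- If `H` and `G` are finitely generated groups all of whose
homomorphisms (and all of whose commutator subgroups' homomorphisms) into `(ℝ, +)` are
trivial, then for any orientation preserving `C¹` action of `H × G` on the circle, the
induced action of either `H × 1` or `1 × G` factors through a finite cyclic group: the
image of at least one of the two factors is a finite cyclic group. -/
theorem product_action_factors_through_finite_cyclic
    (H G : Type*) [Group H] [Group G] [Group.FG H] [Group.FG G]
    (hH : ∀ φ : H →* Multiplicative ℝ, φ = 1)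
    (hH' : ∀ φ : ↥(commutator H) →* Multiplicative ℝ, φ = 1)
    (hG : ∀ φ : G →* Multiplicative ℝ, φ = 1)
    (hG' : ∀ φ : ↥(commutator G) →* Multiplicative ℝ, φ = 1)
    (ρ : H × G →* Equiv.Perm 𝕊) (hρ : ∀ g : H × G, IsC1Diffeo (ρ g)) :
    (Finite (ρ.comp (MonoidHom.inl H G)).range ∧ IsCyclic (ρ.comp (MonoidHom.inl H G)).range) ∨
      (Finite (ρ.comp (MonoidHom.inr H G)).range ∧ IsCyclic (ρ.comp (MonoidHom.inr H G)).range) := by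
  have hc : ∀ u ∈ PAC.Lifts (ρ.comp (MonoidHom.inl H G)),
      ∀ v ∈ PAC.Lifts (ρ.comp (MonoidHom.inr H G)), u * v = v * u := by
    rintro u ⟨h, hu⟩ v ⟨g, hv⟩
    refine PAC.lift_comm hu hv ?_
    simp only [MonoidHom.comp_apply, MonoidHom.inl_apply, MonoidHom.inr_apply, ← map_mul]
    simp
  rcases PAC.dichotomy _ _ hc with ⟨p, hp⟩ | ⟨p, hp⟩
  · exact Or.inl (PAC.conclusion hH hH' _ (fun g => hρ _) p hp)
  · exact Or.inr (PAC.conclusion hG hG' _ (fun g => hρ _) p hp)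
end
end

section
/- Let n ≥ 8 and let Γ be a finite index subgroup of Aut(F_n) that contains the subgroup IA_n of IA-automorphisms. Then any orientation preserving C^1 action of Γ on the circle cannot be faithful; that is, every group homomorphism Γ → Diff^1_+(S^1) has nontrivial kernel. -/
noncomputable section

open MeasureTheory

/-- The free group of rank `n`. -/
abbrev FreeGrp (n : ℕ) : Type := FreeGroup (Fin n)

/-- The automorphism group `Aut(Fₙ)`. -/
abbrev AutF (n : ℕ) : Type := MulAut (FreeGrp n)

/-- The subgroup `IAₙ ≤ Aut(Fₙ)` of automorphisms acting trivially on the abelianization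
`Fₙ^{ab} ≅ ℤⁿ`, i.e. the kernel of the natural map `Aut(Fₙ) → Aut(ℤⁿ)`. -/
def IA (n : ℕ) : Subgroup (AutF n) where
  carrier := {e | ∀ x : FreeGrp n, Abelianization.of (e x) = Abelianization.of x}
  one_mem' := fun _ => rfl
  mul_mem' := by
    intro a b ha hb x
    have h : (a * b) x = a (b x) := rfl
    rw [h, ha (b x), hb x]
  inv_mem' := by
    intro a ha x
    have h := ha (a⁻¹ x)
    have h' : a (a⁻¹ x) = x := a.apply_symm_apply x
    rw [h'] at h
    exact h.symm


section helpers

open Filter Topology Asymptotics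

def NoHom (Q : Type*) [Group Q] : Prop :=
  ∀ φ : Q → ℝ, (∀ a b, φ (a * b) = φ a + φ b) → ∀ a, φ a = 0

theorem thurston_stab {Q : Type*} [Group Q] (S : Finset Q)
    (hS : Subgroup.closure (S : Set Q) = ⊤) (h0 : NoHom Q)
    (f : Q →* (ℝ ≃o ℝ)) (hf : ∀ q, ContDiff ℝ 1 (f q)) (x0 : ℝ) (hx0 : ∀ q, f q x0 = x0) :
    ∀ q x, f q x = x := by
  classical
  by_contra hcon
  push Not at hcon
  obtain ⟨q1, x1, hx1⟩ := hcon
  have fmul : ∀ a b x, f (a * b) x = f a (f b x) := fun a b x => by rw [map_mul]; rfl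
  have fone : ∀ x, f 1 x = x := fun x => by rw [map_one]; rfl
  let Z : Set ℝ := {x | ∀ q, f q x = x}
  have hZc : IsClosed Z := by
    have : Z = ⋂ q, {x | f q x = x} := by ext; simp [Z]
    rw [this]
    exact isClosed_iInter fun q => isClosed_eq (hf q).continuous continuous_id
  obtain ⟨p, hp⟩ : (frontier Z).Nonempty := by
    rw [nonempty_frontier_iff]
    exact ⟨⟨x0, hx0⟩, fun h => hx1 ((h ▸ Set.mem_univ x1 : x1 ∈ Z) q1)⟩
  have hpZ : p ∈ Z := hZc.frontier_subset hp
  have hpc : p ∈ closure Zᶜ := by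
    rw [frontier_eq_closure_inter_closure] at hp
    exact hp.2
  have hne : (𝓝[Zᶜ] p).NeBot := mem_closure_iff_nhdsWithin_neBot.1 hpc
  -- derivatives
  have hdiff : ∀ q x, DifferentiableAt ℝ (f q) x := fun q x =>
    (hf q).differentiable one_ne_zero x
  have hdmul : ∀ a b, deriv (f (a * b)) p = deriv (f a) p * deriv (f b) p := by
    intro a b
    have e : (f (a * b) : ℝ → ℝ) = (f a) ∘ (f b) := funext fun x => fmul a b x
    rw [e, deriv_comp _ (hdiff _ _) (hdiff _ _), hpZ b]
  have hd1 : deriv (f 1) p = 1 := by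
    have e : (f 1 : ℝ → ℝ) = id := funext fun x => fone x
    rw [e]; exact deriv_id p
  have hdpos : ∀ a, 0 < deriv (f a) p := by
    intro a
    have h1 : 0 ≤ deriv (f a) p := (f a).monotone.deriv_nonneg
    have h2 : deriv (f a) p * deriv (f a⁻¹) p = 1 := by rw [← hdmul, mul_inv_cancel, hd1]
    rcases h1.lt_or_eq with h | h
    · exact h
    · rw [← h] at h2; simp at h2
  have hder : ∀ a, deriv (f a) p = 1 := by
    intro a
    have := h0 (fun q => Real.log (deriv (f q) p)) (fun a b => by
      simp only [hdmul]
      exact Real.log_mul (hdpos a).ne' (hdpos b).ne') a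
    exact Real.eq_one_of_pos_of_log_eq_zero (hdpos a) this
  -- strict derivative: o-estimate
  have hstr : ∀ a b, (fun x => (f (a * b) x - x) - (f a x - x) - (f b x - x))
      =o[𝓝[Zᶜ] p] (fun x => f b x - x) := by
    intro a b
    have h1 : HasStrictDerivAt (f a) 1 p := by
      have := ((hf a).contDiffAt (x := p)).hasStrictDerivAt one_ne_zero
      rwa [hder a] at this
    have h2 := h1.isLittleO
    have ht : Tendsto (fun x => (f b x, x)) (𝓝[Zᶜ] p) (𝓝 (p, p)) := by
      rw [nhds_prod_eq]
      refine Tendsto.prodMk ?_ (tendsto_id.mono_left nhdsWithin_le_nhds)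
      have := ((hf b).continuous.tendsto p).mono_left (nhdsWithin_le_nhds (s := Zᶜ))
      rwa [hpZ b] at this
    have h3 := h2.comp_tendsto ht
    refine h3.congr_left ?_
    intro x
    simp
  let D : ℝ → ℝ := fun x => ∑ s ∈ S, |f s x - x|
  have hD0 : ∀ x, 0 ≤ D x := fun x => Finset.sum_nonneg fun _ _ => abs_nonneg _
  have hDpos : ∀ x ∈ Zᶜ, 0 < D x := by
    intro x hx
    refine (hD0 x).lt_of_ne fun h => hx ?_
    have h' := (Finset.sum_eq_zero_iff_of_nonneg (fun s _ => abs_nonneg (f s x - x))).1 h.symm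
    intro q
    have hq : q ∈ Subgroup.closure (S : Set Q) := hS ▸ Subgroup.mem_top q
    induction hq using Subgroup.closure_induction with
    | mem s hs => have := h' s hs; rw [abs_eq_zero] at this; linarith
    | one => exact fone x
    | mul a b _ _ ha hb => rw [fmul, hb, ha]
    | inv a _ ha =>
      have := fmul a⁻¹ a x
      rw [inv_mul_cancel, fone, ha] at this
      exact this.symm
  have hO : ∀ q, (fun x => f q x - x) =O[𝓝[Zᶜ] p] D := by
    intro q
    have hq : q ∈ Subgroup.closure (S : Set Q) := hS ▸ Subgroup.mem_top q
    induction hq using Subgroup.closure_induction with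
    | mem s hs =>
      refine IsBigO.of_bound 1 (Eventually.of_forall fun x => ?_)
      rw [one_mul, Real.norm_eq_abs, Real.norm_of_nonneg (hD0 x)]
      exact Finset.single_le_sum (f := fun s => |f s x - x|) (fun _ _ => abs_nonneg _) hs
    | one => simp only [fone, sub_self]; exact isBigO_zero _ _
    | mul a b _ _ ha hb =>
      have := ((hstr a b).isBigO.trans hb).add (ha.add hb)
      refine this.congr_left fun x => ?_
      ring
    | inv a _ ha =>
      have := ((hstr a⁻¹ a).isBigO.trans ha).add ha
      refine this.neg_left.congr_left fun x => ?_
      rw [inv_mul_cancel, fone]; ring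
  let U : Ultrafilter ℝ := Ultrafilter.of (𝓝[Zᶜ] p)
  have hU : (U : Filter ℝ) ≤ 𝓝[Zᶜ] p := Ultrafilter.of_le _
  have hDU : ∀ᶠ x in (U : Filter ℝ), 0 < D x :=
    hU (eventually_nhdsWithin_of_forall hDpos)
  have hlim : ∀ q, ∃ l : ℝ, Tendsto (fun x => (f q x - x) / D x) U (𝓝 l) := by
    intro q
    obtain ⟨C, hC⟩ := ((hO q).mono hU).bound
    have hmem : ∀ᶠ x in (U : Filter ℝ), (f q x - x) / D x ∈ Set.Icc (-C) C := by
      filter_upwards [hC, hDU] with x h1 h2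
      rw [Real.norm_eq_abs, Real.norm_of_nonneg h2.le] at h1
      rw [Set.mem_Icc, ← abs_le, abs_div, abs_of_pos h2, div_le_iff₀ h2]
      exact h1
    obtain ⟨l, -, hl⟩ := (isCompact_Icc (a := -C) (b := C)).ultrafilter_le_nhds
      (U.map fun x => (f q x - x) / D x) (by
        rw [le_principal_iff]; exact hmem)
    exact ⟨l, hl⟩
  choose φ hφ using hlim
  have hadd : ∀ a b, φ (a * b) = φ a + φ b := by
    intro a b
    have h1 : Tendsto (fun x => ((f (a * b) x - x) - (f a x - x) - (f b x - x)) / D x) U (𝓝 0) :=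
      (((hstr a b).trans_isBigO (hO b)).mono hU).tendsto_div_nhds_zero
    have h2 := ((hφ (a * b)).sub (hφ a)).sub (hφ b)
    have h3 : (fun x => ((f (a * b) x - x) - (f a x - x) - (f b x - x)) / D x) =
      fun x => (f (a * b) x - x) / D x - (f a x - x) / D x - (f b x - x) / D x := by
      funext x; ring
    rw [h3] at h1
    have := tendsto_nhds_unique h1 h2
    linarith
  have hφ0 := h0 φ hadd
  have hs : Tendsto (fun x => ∑ s ∈ S, |(f s x - x) / D x|) U (𝓝 (∑ s ∈ S, |φ s|)) :=
    tendsto_finsetSum _ fun s _ => (hφ s).abs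
  have hs1 : Tendsto (fun x => ∑ s ∈ S, |(f s x - x) / D x|) U (𝓝 1) := by
    refine tendsto_const_nhds.congr' ?_
    filter_upwards [hDU] with x hx
    simp only [abs_div, abs_of_pos hx]
    rw [← Finset.sum_div]
    exact (div_self hx.ne').symm
  have := tendsto_nhds_unique hs hs1
  simp [hφ0] at this

/-- periodic order isomorphisms -/
def Per (g : ℝ ≃o ℝ) : Prop := ∀ x, g (x + 1) = g x + 1

theorem Per.int {g : ℝ ≃o ℝ} (hg : Per g) (k : ℤ) (x : ℝ) : g (x + k) = g x + k := by
  induction k using Int.induction_on with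
  | zero => simp
  | succ n ih => push_cast at *; rw [← add_assoc, hg, ih, add_assoc]
  | pred n ih =>
    have := hg (x + (-(n : ℝ) - 1))
    have e : x + (-(n : ℝ) - 1) + 1 = x + -(n : ℝ) := by ring
    rw [e] at this
    push_cast at *
    linarith

/-- Displacement bounds. -/
theorem Per.disp {g : ℝ ≃o ℝ} (hg : Per g) : ∃ p : ℤ, ∀ x, x + p - 1 ≤ g x ∧ g x ≤ x + p + 2 := by
  refine ⟨⌊g 0⌋, fun x => ?_⟩
  have h1 := hg.int ⌊x⌋ 0
  have h2 := hg.int (⌊x⌋ + 1) 0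
  have h3 : g (0 + ⌊x⌋) ≤ g x := g.monotone (by simpa using Int.floor_le x)
  have h4 : g x ≤ g (0 + ((⌊x⌋ + 1 : ℤ) : ℝ)) := g.monotone (by
    push_cast; simpa using (Int.lt_floor_add_one x).le)
  rw [h1] at h3
  rw [h2] at h4
  have h5 := Int.floor_le x
  have h6 := Int.lt_floor_add_one x
  have h7 := Int.floor_le (g 0)
  have h8 := Int.lt_floor_add_one (g 0)
  push_cast at *
  constructor <;> linarith

theorem holder_comm (H : Subgroup (ℝ ≃o ℝ)) (hper : ∀ h ∈ H, Per h) (K : Set ℝ) (x0 : ℝ)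
    (hx0 : x0 ∈ K) (hK : ∀ h ∈ H, ∀ x ∈ K, h x ∈ K)
    (tri : ∀ h ∈ H, (∀ x ∈ K, h x = x) ∨ (∀ x, x < h x) ∨ (∀ x, h x < x))
    (a b : ℝ ≃o ℝ) (ha : a ∈ H) (hb : b ∈ H) : ¬ (∀ x, x < (a * b * a⁻¹ * b⁻¹) x) := by
  intro hc
  set c := a * b * a⁻¹ * b⁻¹ with hcdef
  have hcH : c ∈ H := H.mul_mem (H.mul_mem (H.mul_mem ha hb) (H.inv_mem ha)) (H.inv_mem hb)
  have mulA : ∀ (u v : ℝ ≃o ℝ) x, (u * v) x = u (v x) := fun _ _ _ => rfl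
  have invA : ∀ (u : ℝ ≃o ℝ) x, u (u⁻¹ x) = x := fun u x => u.apply_symm_apply x
  have invA' : ∀ (u : ℝ ≃o ℝ) x, u⁻¹ (u x) = x := fun u x => u.symm_apply_apply x
  -- eta
  obtain ⟨η, hη, hηc⟩ : ∃ η > 0, ∀ x, x + η ≤ c x := by
    obtain ⟨y, hy, hmin⟩ := (isCompact_Icc (a := (0:ℝ)) (b := 1)).exists_isMinOn
      ⟨0, by simp⟩ ((c.continuous.sub continuous_id).continuousOn)
    refine ⟨c y - y, sub_pos.2 (hc y), fun x => ?_⟩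
    have h1 := hmin (show Int.fract x ∈ Set.Icc (0:ℝ) 1 from
      ⟨Int.fract_nonneg x, (Int.fract_lt_one x).le⟩)
    have h2 := (hper c hcH).int ⌊x⌋ (Int.fract x)
    rw [Int.fract_add_floor] at h2
    have h3 := Int.fract_add_floor x
    simp at h1
    linarith
  obtain ⟨N, hN⟩ := exists_nat_gt (3 / η)
  have hNη : 3 < N * η := by rwa [div_lt_iff₀ hη] at hN
  have hpow : ∀ (n : ℕ) x, x + n * η ≤ (c ^ n) x := by
    intro n
    induction n with
    | zero => intro x; simp
    | succ n ih =>
      intro x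
      rw [pow_succ', mulA]
      have := ih x
      have h2 := hηc ((c ^ n) x)
      push_cast; linarith
  have hN3 : ∀ x, x + 3 < (c ^ N) x := fun x => by have := hpow N x; linarith
  let C : ℕ → (ℝ ≃o ℝ) := fun i => a ^ i * c * (a ^ i)⁻¹
  have hCH : ∀ i, C i ∈ H := fun i =>
    H.mul_mem (H.mul_mem (H.pow_mem ha i) hcH) (H.inv_mem (H.pow_mem ha i))
  have hN0 : (Finset.range (N + 1)).Nonempty := ⟨0, by simp⟩
  obtain ⟨i, hi, hmin⟩ := Finset.exists_min_image (Finset.range (N + 1)) (fun i => C i x0) hN0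
  have hCi : ∀ j ≤ N, ∀ x ∈ K, C i x ≤ C j x := by
    intro j hj x hx
    have h1 := hmin j (Finset.mem_range.2 (by omega))
    rcases tri _ (H.mul_mem (H.inv_mem (hCH i)) (hCH j)) with h | h | h
    · have := h x hx
      rw [mulA] at this
      have h2 := congrArg (C i) this
      rw [invA] at h2
      exact h2.ge
    · have := (C i).monotone (h x).le
      rwa [mulA (C i)⁻¹ (C j), invA] at this
    · have := (C i).strictMono (h x0)
      rw [mulA (C i)⁻¹ (C j), invA] at this
      exact absurd h1 (not_le.2 this)
  let d : ℕ → (ℝ ≃o ℝ) := fun k => a ^ k * b * (a ^ k)⁻¹ * b⁻¹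
  have hd : ∀ k, d (k + 1) = C k * d k := by
    intro k
    simp only [d, C, hcdef]
    group
  have hdK : ∀ k, d k x0 ∈ K := fun k => hK _ (H.mul_mem (H.mul_mem (H.mul_mem (H.pow_mem ha k) hb)
    (H.inv_mem (H.pow_mem ha k))) (H.inv_mem hb)) _ hx0
  have hdC : ∀ k ≤ N, ((C i) ^ k) x0 ≤ d k x0 := by
    intro k
    induction k with
    | zero => intro _; simp [d]
    | succ k ih =>
      intro hk
      rw [pow_succ', mulA, hd, mulA]
      exact ((C i).monotone (ih (by omega))).trans (hCi k (by omega) _ (hdK k))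
  have hCN : x0 + 3 < ((C i) ^ N) x0 := by
    have e : (C i) ^ N = a ^ i * c ^ N * (a ^ i)⁻¹ := by
      simp only [C]; rw [conj_pow]
    rw [e, mulA, mulA]
    have h1 := (a ^ i).strictMono (hN3 ((a ^ i)⁻¹ x0))
    have h2 := (hper _ (H.pow_mem ha i)).int 3 ((a ^ i)⁻¹ x0)
    push_cast at h2
    rw [h2, invA] at h1
    exact h1
  have hdN := hdC N le_rfl
  obtain ⟨p, hp⟩ := (hper b hb).disp
  have h1 : d N x0 ≤ b⁻¹ x0 + p + 2 := by
    simp only [d, mulA]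
    have h2 := (a ^ N).monotone (hp ((a ^ N)⁻¹ (b⁻¹ x0))).2
    have h3 := (hper _ (H.pow_mem ha N)).int (p + 2) ((a ^ N)⁻¹ (b⁻¹ x0))
    push_cast at h3
    rw [← add_assoc] at h3
    rw [h3, invA] at h2
    linarith
  have h2 := (hp (b⁻¹ x0)).1
  rw [invA] at h2
  linarith

theorem holder_fix (H : Subgroup (ℝ ≃o ℝ)) (hper : ∀ h ∈ H, Per h) (K : Set ℝ) (x0 : ℝ)
    (hx0 : x0 ∈ K) (hK : ∀ h ∈ H, ∀ x ∈ K, h x ∈ K)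
    (tri : ∀ h ∈ H, (∀ x ∈ K, h x = x) ∨ (∀ x, x < h x) ∨ (∀ x, h x < x)) :
    ∀ h ∈ ⁅H, H⁆, h x0 = x0 := by
  have key : ⁅H, H⁆ ≤ MulAction.stabilizer (ℝ ≃o ℝ) x0 := by
    rw [Subgroup.commutator_le]
    intro a ha b hb
    have hcH : a * b * a⁻¹ * b⁻¹ ∈ H :=
      H.mul_mem (H.mul_mem (H.mul_mem ha hb) (H.inv_mem ha)) (H.inv_mem hb)
    rw [MulAction.mem_stabilizer_iff]
    rcases tri _ hcH with h | h | h
    · exact h x0 hx0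
    · exact absurd h (holder_comm H hper K x0 hx0 hK tri a b ha hb)
    · exfalso
      refine holder_comm H hper K x0 hx0 hK tri b a hb ha ?_
      intro x
      have := h ((b * a * b⁻¹ * a⁻¹) x)
      have e : (a * b * a⁻¹ * b⁻¹) ((b * a * b⁻¹ * a⁻¹) x) = x := by
        have : (a * b * a⁻¹ * b⁻¹) * (b * a * b⁻¹ * a⁻¹) = 1 := by group
        exact congrArg (fun u : ℝ ≃o ℝ => u x) this
      rwa [e] at this
  exact fun h hh => key hh

theorem int_orderIso (f : ℤ ≃o ℤ) (n : ℤ) : f n = f 0 + n := by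
  have hs : ∀ m : ℤ, f (m + 1) = f m + 1 := fun m => f.map_succ m
  induction n using Int.induction_on with
  | zero => simp
  | succ k ih => rw [hs, ih]; ring
  | pred k ih =>
    have := hs (-(k:ℤ) - 1)
    rw [sub_add_cancel, ih] at this
    linarith

/-- A group preserving a uniformly discrete set acts on it through an abelian group. -/
theorem discrete_fix (G : Subgroup (ℝ ≃o ℝ)) (A : Set ℝ) (δ : ℝ) (hδ : 0 < δ)
    (x0 : ℝ) (hx0 : x0 ∈ A) (hA : ∀ g ∈ G, ∀ x ∈ A, g x ∈ A)
    (hT : ∀ x ∈ A, x + 1 ∈ A) (hT' : ∀ x ∈ A, x - 1 ∈ A)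
    (hsep : ∀ x ∈ A, ∀ y ∈ A, x < y → δ ≤ y - x) :
    ∀ g ∈ ⁅G, G⁆, g x0 = x0 := by
  classical
  have hfin : ∀ a b : A, (Set.Icc a b).Finite := by
    intro a b
    obtain ⟨N, hN⟩ := exists_nat_gt ((b.1 - a.1) / δ)
    rw [div_lt_iff₀ hδ] at hN
    let φ : A → ℤ := fun x => ⌊(x.1 - a.1) / δ⌋
    refine Set.Finite.of_finite_image (f := φ) ((Set.finite_Icc (0:ℤ) N).subset ?_) ?_
    · rintro _ ⟨x, hx, rfl⟩
      have h1 : a.1 ≤ x.1 := hx.1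
      have h2 : x.1 ≤ b.1 := hx.2
      refine ⟨Int.floor_nonneg.2 (div_nonneg (by linarith) hδ.le), ?_⟩
      have : ((x.1 - a.1) / δ) ≤ N := by rw [div_le_iff₀ hδ]; linarith
      exact_mod_cast (Int.floor_le _).trans this
    · have aux : ∀ x y : A, φ x = φ y → ¬ x.1 < y.1 := by
        intro x y hxy hlt
        have h1 := hsep x.1 x.2 y.1 y.2 hlt
        have h2 := Int.abs_sub_lt_one_of_floor_eq_floor hxy
        have h3 : (x.1 - a.1) / δ - (y.1 - a.1) / δ = - ((y.1 - x.1) / δ) := by ring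
        rw [h3, abs_neg, abs_of_pos (div_pos (by linarith) hδ), div_lt_one hδ] at h2
        linarith
      intro x _ y _ hxy
      apply Subtype.ext
      rcases lt_trichotomy x.1 y.1 with h | h | h
      · exact absurd h (aux x y hxy)
      · exact h
      · exact absurd h (aux y x hxy.symm)
  let _ : LocallyFiniteOrder A := LocallyFiniteOrder.ofFiniteIcc hfin
  let _ : SuccOrder A := LinearLocallyFiniteOrder.succOrder A
  let _ : PredOrder A := LinearLocallyFiniteOrder.predOrder A
  have : NoMaxOrder A := ⟨fun a => ⟨⟨a.1 + 1, hT _ a.2⟩, by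
    show a.1 < a.1 + 1; linarith⟩⟩
  have : NoMinOrder A := ⟨fun a => ⟨⟨a.1 - 1, hT' _ a.2⟩, by
    show a.1 - 1 < a.1; linarith⟩⟩
  have : Nonempty A := ⟨⟨x0, hx0⟩⟩
  let e : A ≃o ℤ := orderIsoIntOfLinearSuccPredArch
  have hres : ∀ g ∈ G, ∃ k : ℤ, ∀ x : A, ∀ h : g x.1 ∈ A, e ⟨g x.1, h⟩ = e x + k := by
    intro g hg
    let gA : A ≃o A :=
      { toFun := fun x => ⟨g x.1, hA g hg _ x.2⟩
        invFun := fun x => ⟨g⁻¹ x.1, hA g⁻¹ (G.inv_mem hg) _ x.2⟩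
        left_inv := fun x => Subtype.ext (g.symm_apply_apply x.1)
        right_inv := fun x => Subtype.ext (g.apply_symm_apply x.1)
        map_rel_iff' := by
          intro x y
          exact g.le_iff_le }
    let f : ℤ ≃o ℤ := e.symm.trans (gA.trans e)
    refine ⟨f 0, fun x h => ?_⟩
    have := int_orderIso f (e x)
    simp only [f, OrderIso.trans_apply, OrderIso.symm_apply_apply] at this
    rw [add_comm]
    exact this
  have comm : ∀ g ∈ G, ∀ h ∈ G, ∀ x ∈ A, g (h x) = h (g x) := by
    intro g hg h hh x hx
    obtain ⟨k, hk⟩ := hres g hg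
    obtain ⟨l, hl⟩ := hres h hh
    have h1 := hk ⟨h x, hA h hh x hx⟩ (hA g hg _ (hA h hh x hx))
    have h2 := hl ⟨g x, hA g hg x hx⟩ (hA h hh _ (hA g hg x hx))
    have h3 := hk ⟨x, hx⟩ (hA g hg x hx)
    have h4 := hl ⟨x, hx⟩ (hA h hh x hx)
    rw [h4] at h1
    rw [h3] at h2
    have h5 : e ⟨g (h x), hA g hg _ (hA h hh x hx)⟩ = e ⟨h (g x), hA h hh _ (hA g hg x hx)⟩ := by
      rw [h1, h2]; ring
    exact congrArg Subtype.val (e.injective h5)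
  have key : ⁅G, G⁆ ≤ MulAction.stabilizer (ℝ ≃o ℝ) x0 := by
    rw [Subgroup.commutator_le]
    intro a ha b hb
    rw [MulAction.mem_stabilizer_iff]
    have h1 : a⁻¹ (b⁻¹ x0) ∈ A := hA _ (G.inv_mem ha) _ (hA _ (G.inv_mem hb) _ hx0)
    have h2 := comm a ha b hb _ h1
    show a (b (a⁻¹ (b⁻¹ x0))) = x0
    rw [h2]
    have e1 : a (a⁻¹ (b⁻¹ x0)) = b⁻¹ x0 := a.apply_symm_apply _
    rw [e1]
    exact b.apply_symm_apply _
  exact fun h hh => key hh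


/-- unit translation -/
def TT : ℝ ≃o ℝ := OrderIso.addRight 1

theorem TT_apply (x : ℝ) : TT x = x + 1 := rfl

theorem TT_inv_apply (x : ℝ) : TT⁻¹ x = x - 1 := by
  have h : TT (TT⁻¹ x) = x := TT.apply_symm_apply x
  rw [TT_apply] at h
  linarith

theorem inv_int {G : Subgroup (ℝ ≃o ℝ)} (hT : TT ∈ G) {C : Set ℝ}
    (hC : ∀ g ∈ G, ∀ x ∈ C, g x ∈ C) (k : ℤ) (x : ℝ) (hx : x ∈ C) : x + k ∈ C := by
  induction k using Int.induction_on with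
  | zero => simpa
  | succ n ih =>
    have := hC _ hT _ ih
    rw [TT_apply] at this
    push_cast at *
    rwa [← add_assoc]
  | pred n ih =>
    have := hC _ (G.inv_mem hT) _ ih
    rw [TT_inv_apply] at this
    push_cast at *
    rwa [← add_sub_assoc]

theorem disjoint_fix (G : Subgroup (ℝ ≃o ℝ)) (hT : TT ∈ G)
    (C K : Set ℝ) (hCc : IsClosed C) (hKc : IsClosed K) (hCn : C.Nonempty) (hKn : K.Nonempty)
    (hCG : ∀ g ∈ G, ∀ x ∈ C, g x ∈ C) (hKG : ∀ g ∈ G, ∀ x ∈ K, g x ∈ K)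
    (hd : Disjoint C K) : ∃ x, ∀ g ∈ ⁅G, G⁆, g x = x := by
  obtain ⟨k0, hk0⟩ := hKn
  obtain ⟨c0, hc0⟩ := hCn
  -- separation
  obtain ⟨δ, hδ, hsep⟩ : ∃ δ > 0, ∀ c ∈ C, ∀ k ∈ K, δ ≤ |k - c| := by
    have hcomp : IsCompact (C ∩ Set.Icc (0:ℝ) 1) := isCompact_Icc.inter_left hCc
    obtain ⟨δ, hδ, h⟩ := hcomp.exists_cthickening_subset_open hKc.isOpen_compl
      (fun x hx hk => Set.disjoint_left.1 hd hx.1 hk)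
    refine ⟨δ, hδ, fun c hc k hk => ?_⟩
    by_contra hlt
    push Not at hlt
    have h1 : c + ((-⌊c⌋ : ℤ) : ℝ) ∈ C := inv_int hT hCG _ _ hc
    have h2 : k + ((-⌊c⌋ : ℤ) : ℝ) ∈ K := inv_int hT hKG _ _ hk
    have h3 : c + ((-⌊c⌋ : ℤ) : ℝ) ∈ C ∩ Set.Icc (0:ℝ) 1 := by
      refine ⟨h1, ?_⟩
      have := Int.floor_le c
      have := Int.lt_floor_add_one c
      push_cast
      constructor <;> linarith
    refine h (Metric.mem_cthickening_of_dist_le _ _ _ _ h3 ?_) h2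
    rw [Real.dist_eq]
    have : k + ((-⌊c⌋ : ℤ) : ℝ) - (c + ((-⌊c⌋ : ℤ) : ℝ)) = k - c := by ring
    rw [this]
    exact hlt.le
  have hne : ∀ c : ℝ, (K ∩ Set.Iic c).Nonempty := by
    intro c
    refine ⟨k0 + ((⌊c - k0⌋ : ℤ) : ℝ), inv_int hT hKG _ _ hk0, ?_⟩
    have := Int.floor_le (c - k0)
    simp only [Set.mem_Iic]; linarith
  have hbd : ∀ c : ℝ, BddAbove (K ∩ Set.Iic c) := fun c => ⟨c, fun x hx => hx.2⟩
  let a : ℝ → ℝ := fun c => sSup (K ∩ Set.Iic c)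
  have ha : ∀ c, a c ∈ K ∩ Set.Iic c := fun c =>
    (hKc.inter isClosed_Iic).csSup_mem (hne c) (hbd c)
  have hag : ∀ g ∈ G, ∀ c, g (a c) = a (g c) := by
    intro g hg c
    apply le_antisymm
    · exact le_csSup (hbd _) ⟨hKG g hg _ (ha c).1, g.monotone (ha c).2⟩
    · have h1 : g⁻¹ (a (g c)) ≤ a c := by
        refine le_csSup (hbd _) ⟨hKG _ (G.inv_mem hg) _ (ha _).1, ?_⟩
        have := (g⁻¹).monotone (ha (g c)).2
        have e : g⁻¹ (g c) = c := g.symm_apply_apply c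
        rwa [e] at this
      have h2 := g.monotone h1
      have e : g (g⁻¹ (a (g c))) = a (g c) := g.apply_symm_apply _
      rwa [e] at h2
  refine ⟨a c0, discrete_fix G (a '' C) δ hδ (a c0) ⟨c0, hc0, rfl⟩ ?_ ?_ ?_ ?_⟩
  · rintro g hg _ ⟨c, hc, rfl⟩
    exact ⟨g c, hCG g hg c hc, (hag g hg c).symm⟩
  · rintro _ ⟨c, hc, rfl⟩
    exact ⟨TT c, hCG _ hT c hc, (hag _ hT c).symm⟩
  · rintro _ ⟨c, hc, rfl⟩
    refine ⟨TT⁻¹ c, hCG _ (G.inv_mem hT) c hc, ?_⟩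
    rw [← hag _ (G.inv_mem hT) c, TT_inv_apply]
  · rintro _ ⟨c, hc, rfl⟩ _ ⟨c', hc', rfl⟩ hlt
    have h1 : c < a c' := by
      by_contra h
      push Not at h
      exact absurd (le_csSup (hbd c) ⟨(ha c').1, h⟩) (not_le.2 hlt)
    have h2 := hsep c hc _ (ha c').1
    rw [abs_of_pos (by linarith)] at h2
    have h3 : a c ≤ c := (ha c).2
    linarith

theorem dyn (G H : Subgroup (ℝ ≃o ℝ)) (hper : ∀ h ∈ H, Per h) (hT : TT ∈ G)
    (hcomm : ∀ g ∈ G, ∀ h ∈ H, g * h = h * g) :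
    (∃ x, ∀ g ∈ ⁅G, G⁆, g x = x) ∨ (∃ x, ∀ h ∈ ⁅H, H⁆, h x = x) := by
  by_cases hf : ∃ x, ∀ g ∈ ⁅G, G⁆, g x = x
  · exact Or.inl hf
  right
  let S : Set (Set ℝ) := {C | IsClosed C ∧ C.Nonempty ∧ ∀ g ∈ G, ∀ x ∈ C, g x ∈ C}
  have hS : ∀ C ∈ S, ∀ K ∈ S, C ∩ K ∈ S := by
    rintro C ⟨h1, h2, h3⟩ K ⟨h4, h5, h6⟩
    refine ⟨h1.inter h4, ?_, fun g hg x hx => ⟨h3 g hg x hx.1, h6 g hg x hx.2⟩⟩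
    by_contra hn
    exact hf (disjoint_fix G hT C K h1 h4 h2 h5 h3 h6
      (Set.disjoint_iff_inter_eq_empty.2 (Set.not_nonempty_iff_eq_empty.1 hn)))
  have huniv : (Set.univ : Set ℝ) ∈ S := ⟨isClosed_univ, ⟨0, trivial⟩, fun _ _ _ _ => trivial⟩
  let K : Set ℝ := ⋂₀ S
  obtain ⟨x0, hx0⟩ : K.Nonempty := by
    have : Nonempty S := ⟨⟨_, huniv⟩⟩
    have := IsCompact.nonempty_iInter_of_directed_nonempty_isCompact_isClosed
      (fun C : S => C.1 ∩ Set.Icc (0:ℝ) 1) ?_ ?_ ?_ ?_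
    · obtain ⟨x, hx⟩ := this
      refine ⟨x, fun C hC => ?_⟩
      exact (Set.mem_iInter.1 hx ⟨C, hC⟩).1
    · intro C D
      exact ⟨⟨C.1 ∩ D.1, hS _ C.2 _ D.2⟩, fun x hx => ⟨hx.1.1, hx.2⟩, fun x hx => ⟨hx.1.2, hx.2⟩⟩
    · rintro ⟨C, h1, ⟨c, hc⟩, h3⟩
      refine ⟨c + ((-⌊c⌋ : ℤ) : ℝ), inv_int hT h3 _ _ hc, ?_⟩
      have := Int.floor_le c
      have := Int.lt_floor_add_one c
      push_cast
      constructor <;> linarith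
    · exact fun C => isCompact_Icc.inter_left C.2.1
    · exact fun C => C.2.1.inter isClosed_Icc
  have hcomm' : ∀ g ∈ G, ∀ h ∈ H, ∀ x, g (h x) = h (g x) := fun g hg h hh x =>
    congrArg (fun u : ℝ ≃o ℝ => u x) (hcomm g hg h hh)
  refine ⟨x0, holder_fix H hper K x0 hx0 ?_ ?_⟩
  · intro h hh x hx C hC
    have : h ⁻¹' C ∈ S := by
      obtain ⟨h1, ⟨c, hc⟩, h3⟩ := hC
      refine ⟨h1.preimage h.continuous, ⟨h.symm c, by simpa using hc⟩, fun g hg y hy => ?_⟩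
      show h (g y) ∈ C
      rw [← hcomm' g hg h hh]
      exact h3 g hg _ hy
    exact hx _ this
  · intro h hh
    by_cases hfix : ∃ y, h y = y
    · left
      have : {y | h y = y} ∈ S := by
        refine ⟨isClosed_eq h.continuous continuous_id, hfix, fun g hg y hy => ?_⟩
        show h (g y) = g y
        rw [← hcomm' g hg h hh, hy]
      exact fun x hx => hx {y | h y = y} this
    · right
      push Not at hfix
      by_contra hcon
      push Not at hcon
      obtain ⟨⟨x, hx⟩, y, hy⟩ := hcon
      have := mem_range_of_exists_le_of_exists_ge (h.continuous.sub continuous_id) (c := 0)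
        ⟨x, by simpa using hx⟩ ⟨y, by simpa using hy⟩
      obtain ⟨z, hz⟩ := this
      exact hfix z (by simpa [sub_eq_zero] using hz)


/-- kills the letter `i` -/
def killL {n : ℕ} (i : Fin n) : FreeGrp n →* FreeGrp n :=
  FreeGroup.lift (fun m => if m = i then 1 else FreeGroup.of m)

theorem killL_self {n : ℕ} (i : Fin n) : killL i (FreeGroup.of i) = 1 := by simp [killL]

theorem killL_ne {n : ℕ} {i m : Fin n} (h : m ≠ i) :
    killL i (FreeGroup.of m) = FreeGroup.of m := by simp [killL, h]

theorem killL_killL {n : ℕ} (i : Fin n) (y : FreeGrp n) : killL i (killL i y) = killL i y := by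
  have : (killL i).comp (killL i) = killL i := by
    apply FreeGroup.ext_hom
    intro m
    by_cases h : m = i
    · subst h; simp [killL_self]
    · simp [killL_ne h]
  exact congrArg (fun f : FreeGrp n →* FreeGrp n => f y) this

theorem killL_comm {n : ℕ} (i l : Fin n) (y : FreeGrp n) :
    killL i (killL l y) = killL l (killL i y) := by
  have : (killL i).comp (killL l) = (killL l).comp (killL i) := by
    apply FreeGroup.ext_hom
    intro m
    simp only [MonoidHom.comp_apply]
    by_cases h : m = i
    · subst h
      by_cases h2 : m = l
      · subst h2; rfl
      · simp [killL_self, killL_ne h2]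
    · by_cases h2 : m = l
      · subst h2; simp [killL_self, killL_ne h]
      · simp [killL_ne h, killL_ne h2]
  exact congrArg (fun f : FreeGrp n →* FreeGrp n => f y) this

/-- two sided transvection -/
def Bfun {n : ℕ} (i : Fin n) (u v : FreeGrp n) : FreeGrp n →* FreeGrp n :=
  FreeGroup.lift (fun m => if m = i then (killL i u)⁻¹ * FreeGroup.of i * killL i v
    else FreeGroup.of m)

theorem Bfun_self {n : ℕ} (i : Fin n) (u v : FreeGrp n) :
    Bfun i u v (FreeGroup.of i) = (killL i u)⁻¹ * FreeGroup.of i * killL i v := by simp [Bfun]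

theorem Bfun_ne {n : ℕ} {i m : Fin n} (h : m ≠ i) (u v : FreeGrp n) :
    Bfun i u v (FreeGroup.of m) = FreeGroup.of m := by simp [Bfun, h]

theorem Bfun_kill {n : ℕ} (i : Fin n) (u v y : FreeGrp n) :
    Bfun i u v (killL i y) = killL i y := by
  have : (Bfun i u v).comp (killL i) = killL i := by
    apply FreeGroup.ext_hom
    intro m
    by_cases h : m = i
    · subst h; simp [killL_self]
    · simp [killL_ne h, Bfun_ne h]
  exact congrArg (fun f : FreeGrp n →* FreeGrp n => f y) this

theorem Bfun_Bfun {n : ℕ} (i : Fin n) (u v u' v' y : FreeGrp n) :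
    Bfun i u v (Bfun i u' v' y) = Bfun i (u * u') (v * v') y := by
  have : (Bfun i u v).comp (Bfun i u' v') = Bfun i (u * u') (v * v') := by
    apply FreeGroup.ext_hom
    intro m
    by_cases h : m = i
    · subst h; simp [Bfun_self, Bfun_kill, mul_assoc]
    · simp [Bfun_ne h]
  exact congrArg (fun f : FreeGrp n →* FreeGrp n => f y) this

theorem Bfun_one {n : ℕ} (i : Fin n) (y : FreeGrp n) : Bfun i 1 1 y = y := by
  have : Bfun i 1 1 = MonoidHom.id (FreeGrp n) := by
    apply FreeGroup.ext_hom
    intro m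
    by_cases h : m = i
    · subst h; simp [Bfun_self]
    · simp [Bfun_ne h]
  exact congrArg (fun f : FreeGrp n →* FreeGrp n => f y) this

/-- two sided transvections as a homomorphism -/
def BB {n : ℕ} (i : Fin n) : FreeGrp n × FreeGrp n →* AutF n :=
  MonoidHom.mk' (fun p =>
    { toFun := Bfun i p.1 p.2
      invFun := Bfun i p.1⁻¹ p.2⁻¹
      left_inv := fun y => by rw [Bfun_Bfun, inv_mul_cancel, inv_mul_cancel, Bfun_one]
      right_inv := fun y => by rw [Bfun_Bfun, mul_inv_cancel, mul_inv_cancel, Bfun_one]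
      map_mul' := fun x y => map_mul _ x y })
    (fun p q => by
      apply MulEquiv.ext
      intro y
      exact (Bfun_Bfun i p.1 p.2 q.1 q.2 y).symm)

theorem BB_apply {n : ℕ} (i : Fin n) (p : FreeGrp n × FreeGrp n) (y : FreeGrp n) :
    BB i p y = Bfun i p.1 p.2 y := rfl

theorem aut_ext {n : ℕ} {a b : AutF n} (h : ∀ m, a (FreeGroup.of m) = b (FreeGroup.of m)) :
    a = b := by
  have : a.toMonoidHom = b.toMonoidHom := FreeGroup.ext_hom _ _ h
  apply MulEquiv.ext
  intro y
  exact congrArg (fun f : FreeGrp n →* FreeGrp n => f y) this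

theorem BB_conj_gen {n : ℕ} (i : Fin n) (a : AutF n) (h1 : a (FreeGroup.of i) = FreeGroup.of i)
    (h2 : ∀ y, a (killL i y) = killL i (a y)) (p : FreeGrp n × FreeGrp n) :
    a * BB i p * a⁻¹ = BB i (a p.1, a p.2) := by
  rw [mul_inv_eq_iff_eq_mul]
  apply aut_ext
  intro m
  show a (Bfun i p.1 p.2 (FreeGroup.of m)) = Bfun i (a p.1) (a p.2) (a (FreeGroup.of m))
  by_cases h : m = i
  · subst h
    rw [h1, Bfun_self, Bfun_self, map_mul, map_mul, map_inv, h1, h2, h2]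
  · rw [Bfun_ne h, ← killL_ne h, h2, Bfun_kill]

theorem BB_comm_kill {n : ℕ} {i l : Fin n} (hil : l ≠ i) (p q : FreeGrp n)
    (hp : killL i p = p) (hq : killL i q = q) (y : FreeGrp n) :
    BB l (p, q) (killL i y) = killL i (BB l (p, q) y) := by
  have : (Bfun l p q).comp (killL i) = (killL i).comp (Bfun l p q) := by
    apply FreeGroup.ext_hom
    intro m
    by_cases h : m = i
    · subst h; simp [killL_self, Bfun_ne hil.symm]
    · by_cases h' : m = l
      · subst h'
        simp only [MonoidHom.comp_apply, killL_ne h, Bfun_self, map_mul, map_inv]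
        rw [killL_comm i m p, killL_comm i m q, hp, hq]
      · simp [killL_ne h, Bfun_ne h']
  exact congrArg (fun f : FreeGrp n →* FreeGrp n => f y) this

theorem BB_conj {n : ℕ} {i l : Fin n} (hil : l ≠ i) (p q : FreeGrp n)
    (hp : killL i p = p) (hq : killL i q = q) (r : FreeGrp n × FreeGrp n) :
    BB l (p, q) * BB i r * (BB l (p, q))⁻¹ = BB i (BB l (p, q) r.1, BB l (p, q) r.2) :=
  BB_conj_gen i _ (Bfun_ne hil.symm _ _) (BB_comm_kill hil p q hp hq) r

theorem BB_IA {n : ℕ} (i : Fin n) (u v : FreeGrp n)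
    (h : Abelianization.of u = Abelianization.of v) : BB i (u, v) ∈ IA n := by
  have h2 : Abelianization.of (killL i u) = Abelianization.of (killL i v) := by
    have := congrArg (Abelianization.map (killL i)) h
    simpa using this
  have : Abelianization.of.comp (Bfun i u v) = Abelianization.of := by
    apply FreeGroup.ext_hom
    intro m
    by_cases h : m = i
    · subst h
      simp only [MonoidHom.comp_apply, Bfun_self, map_mul, map_inv, h2]
      rw [mul_comm, mul_inv_cancel_left]
    · simp [Bfun_ne h]
  intro x
  exact congrArg (fun f : FreeGrp n →* Abelianization (FreeGrp n) => f x) this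

/-- left or right inclusion -/
def side {n : ℕ} (s : Bool) : FreeGrp n →* FreeGrp n × FreeGrp n :=
  if s then MonoidHom.inl _ _ else MonoidHom.inr _ _

theorem side_conj {n : ℕ} (s : Bool) (g y : FreeGrp n) :
    (g, g) * side s y * (g, g)⁻¹ = side s (g * y * g⁻¹) := by
  cases s <;> simp [side]

theorem side_map {n : ℕ} (s : Bool) (a : AutF n) (y : FreeGrp n) :
    (a (side s y).1, a (side s y).2) = side s (a y) := by
  cases s <;> simp [side]

/-- words in two letters -/
def W2 {n : ℕ} (j k : Fin n) : Subgroup (FreeGrp n) :=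
  Subgroup.closure {FreeGroup.of j, FreeGroup.of k}

theorem W2_symm {n : ℕ} (j k : Fin n) : W2 j k = W2 k j := by
  unfold W2; rw [Set.pair_comm]

theorem W2_left {n : ℕ} (j k : Fin n) : FreeGroup.of j ∈ W2 j k :=
  Subgroup.subset_closure (by simp)

theorem W2_right {n : ℕ} (j k : Fin n) : FreeGroup.of k ∈ W2 j k :=
  Subgroup.subset_closure (by simp)

theorem W2_fix {n : ℕ} (j k : Fin n) (f : FreeGrp n →* FreeGrp n)
    (hj : f (FreeGroup.of j) = FreeGroup.of j) (hk : f (FreeGroup.of k) = FreeGroup.of k)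
    (w : FreeGrp n) (hw : w ∈ W2 j k) : f w = w := by
  have : W2 j k ≤ f.eqLocus (MonoidHom.id _) := by
    rw [W2, Subgroup.closure_le]
    rintro x (rfl | rfl)
    · exact hj
    · exact hk
  exact this hw

/-- inclusion of the two-letter free group -/
def iot {n : ℕ} (j k : Fin n) : FreeGroup Bool →* FreeGrp n :=
  FreeGroup.lift (fun b => if b then FreeGroup.of j else FreeGroup.of k)

theorem iot_range {n : ℕ} (j k : Fin n) : (iot j k).range = W2 j k := by
  rw [iot, FreeGroup.range_lift_eq_closure, W2]
  congr 1
  ext x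
  constructor
  · rintro ⟨b, rfl⟩
    cases b <;> simp
  · rintro (rfl | rfl)
    · exact ⟨true, by simp⟩
    · exact ⟨false, by simp⟩

/-- the maps `b_{ijk}` -/
def bmap {n : ℕ} (i j k : Fin n) : FreeGroup Bool × FreeGroup Bool →* AutF n :=
  (BB i).comp ((iot j k).prodMap (iot j k))

theorem bmap_apply {n : ℕ} (i j k : Fin n) (p : FreeGroup Bool × FreeGroup Bool) :
    bmap i j k p = BB i (iot j k p.1, iot j k p.2) := rfl

/-- distinct triples of letters in `L` -/
def Trip {n : ℕ} (L : Set (Fin n)) : Type :=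
  {t : Fin n × Fin n × Fin n // t.1 ∈ L ∧ t.2.1 ∈ L ∧ t.2.2 ∈ L ∧ t.1 ≠ t.2.1 ∧ t.1 ≠ t.2.2 ∧
    t.2.1 ≠ t.2.2}

instance {n : ℕ} (L : Set (Fin n)) : Finite (Trip L) := by unfold Trip; infer_instance

/-- the subgroup `Q(P)` -/
def QQ {n : ℕ} (L : Set (Fin n)) (P : Subgroup (AutF n)) : Subgroup (AutF n) :=
  ⨆ t : Trip L, (P.comap (bmap t.1.1 t.1.2.1 t.1.2.2)).map (bmap t.1.1 t.1.2.1 t.1.2.2)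

theorem QQ_le {n : ℕ} (L : Set (Fin n)) (P : Subgroup (AutF n)) : QQ L P ≤ P :=
  iSup_le fun _ => Subgroup.map_comap_le _ _

theorem mem_QQ {n : ℕ} {L : Set (Fin n)} {P : Subgroup (AutF n)} {i j k : Fin n}
    (hi : i ∈ L) (hj : j ∈ L) (hk : k ∈ L) (hij : i ≠ j) (hik : i ≠ k) (hjk : j ≠ k)
    {u v : FreeGrp n} (hu : u ∈ W2 j k) (hv : v ∈ W2 j k) (h : BB i (u, v) ∈ P) :
    BB i (u, v) ∈ QQ L P := by
  rw [← iot_range] at hu hv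
  obtain ⟨u, rfl⟩ := hu
  obtain ⟨v, rfl⟩ := hv
  refine Subgroup.mem_iSup_of_mem (⟨(i, j, k), hi, hj, hk, hij, hik, hjk⟩ : Trip L) ?_
  exact ⟨(u, v), h, rfl⟩

theorem QQ_induct {n : ℕ} {L : Set (Fin n)} {P R : Subgroup (AutF n)}
    (h : ∀ i j k, i ∈ L → j ∈ L → k ∈ L → i ≠ j → i ≠ k → j ≠ k → ∀ u ∈ W2 j k, ∀ v ∈ W2 j k,
      BB i (u, v) ∈ P → BB i (u, v) ∈ R) : QQ L P ≤ R := by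
  refine iSup_le ?_
  rintro ⟨⟨i, j, k⟩, hi, hj, hk, hij, hik, hjk⟩
  rintro _ ⟨p, hp, rfl⟩
  refine h i j k hi hj hk hij hik hjk _ ?_ _ ?_ hp
  · rw [← iot_range]; exact ⟨_, rfl⟩
  · rw [← iot_range]; exact ⟨_, rfl⟩

/-- `[x_l⁻¹, x_j]` -/
def ee {n : ℕ} (l j : Fin n) : FreeGrp n :=
  (FreeGroup.of l)⁻¹ * FreeGroup.of j * FreeGroup.of l * (FreeGroup.of j)⁻¹

theorem ee_mem {n : ℕ} (l j : Fin n) : ee l j ∈ W2 l j :=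
  mul_mem (mul_mem (mul_mem (inv_mem (W2_left l j)) (W2_right l j)) (W2_left l j))
    (inv_mem (W2_right l j))

/-- `[e, x_j]` -/
def vv {n : ℕ} (l j : Fin n) : FreeGrp n :=
  ee l j * FreeGroup.of j * (ee l j)⁻¹ * (FreeGroup.of j)⁻¹

theorem vv_mem {n : ℕ} (l j : Fin n) : vv l j ∈ W2 l j :=
  mul_mem (mul_mem (mul_mem (ee_mem l j) (W2_right l j)) (inv_mem (ee_mem l j)))
    (inv_mem (W2_right l j))

/-- the diagonal elements `B_i(g,g)` -/
def DD {n : ℕ} (i : Fin n) (g : FreeGrp n) : AutF n := BB i (g, g)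

/-- hypotheses (*) -/
structure StarH {n : ℕ} (L : Set (Fin n)) (P : Subgroup (AutF n)) : Prop where
  fi : ∀ i j k, i ∈ L → j ∈ L → k ∈ L → i ≠ j → i ≠ k → j ≠ k →
    (P.comap (bmap i j k)).index ≠ 0
  nrm : ∀ i j, i ∈ L → j ∈ L → i ≠ j → ∀ p ∈ P,
    DD i (FreeGroup.of j) * p * (DD i (FreeGroup.of j))⁻¹ ∈ P ∧
    (DD i (FreeGroup.of j))⁻¹ * p * DD i (FreeGroup.of j) ∈ P
  cm : ∀ i j l, i ∈ L → j ∈ L → l ∈ L → i ≠ j → i ≠ l → j ≠ l → ∀ s, BB i (side s (vv l j)) ∈ P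
  em : ∀ i j l, i ∈ L → j ∈ L → l ∈ L → i ≠ j → i ≠ l → j ≠ l → DD i (ee l j) ∈ P

theorem QQ_fg {n : ℕ} {L : Set (Fin n)} {P : Subgroup (AutF n)} (h : StarH L P) : (QQ L P).FG := by
  refine Subgroup.FG.iSup _ fun t => ?_
  obtain ⟨⟨i, j, k⟩, hi, hj, hk, hij, hik, hjk⟩ := t
  have : (P.comap (bmap i j k)).FiniteIndex := ⟨h.fi i j k hi hj hk hij hik hjk⟩
  have h2 : Group.FG (P.comap (bmap i j k)) := inferInstance
  have h3 := (Group.fg_iff_subgroup_fg _).1 h2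
  obtain ⟨S, hS⟩ := h3
  classical
  refine ⟨S.image (bmap i j k), ?_⟩
  rw [Finset.coe_image, ← MonoidHom.map_closure, hS]

theorem starH_pow {n : ℕ} {L : Set (Fin n)} {P : Subgroup (AutF n)} (h : StarH L P) :
    ∃ M : ℕ, 0 < M ∧ ∀ i j k, i ∈ L → j ∈ L → k ∈ L → i ≠ j → i ≠ k → j ≠ k →
      ∀ u ∈ W2 j k, ∀ v ∈ W2 j k, BB i (u ^ M, v ^ M) ∈ P := by
  classical
  have := Fintype.ofFinite (Trip L)
  let idx : Trip L → ℕ := fun t => (P.comap (bmap t.1.1 t.1.2.1 t.1.2.2)).normalCore.index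
  have hidx : ∀ t, idx t ≠ 0 := by
    rintro ⟨⟨i, j, k⟩, hi, hj, hk, hij, hik, hjk⟩
    have : (P.comap (bmap i j k)).FiniteIndex := ⟨h.fi i j k hi hj hk hij hik hjk⟩
    exact Subgroup.FiniteIndex.index_ne_zero
  refine ⟨∏ t, idx t, Nat.pos_of_ne_zero (Finset.prod_ne_zero_iff.2 fun t _ => hidx t), ?_⟩
  intro i j k hi hj hk hij hik hjk u hu v hv
  rw [← iot_range] at hu hv
  obtain ⟨u, rfl⟩ := hu
  obtain ⟨v, rfl⟩ := hv
  let t0 : Trip L := ⟨(i, j, k), hi, hj, hk, hij, hik, hjk⟩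
  obtain ⟨c, hc⟩ : idx t0 ∣ ∏ t, idx t := Finset.dvd_prod_of_mem idx (Finset.mem_univ t0)
  have h1 := Subgroup.pow_index_mem (P.comap (bmap i j k)).normalCore (u, v)
  have h2 := Subgroup.pow_mem _ h1 c
  rw [← pow_mul] at h2
  have h3 := Subgroup.normalCore_le _ h2
  have e : (P.comap (bmap i j k)).normalCore.index * c = ∏ t, idx t := hc.symm
  rw [e] at h3
  have h4 : bmap i j k ((u, v) ^ ∏ t, idx t) ∈ P := h3
  rw [bmap_apply] at h4
  simpa using h4

theorem finite_abelianization {Q : Type*} [Group Q] [Group.FG Q] (h : NoHom Q) :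
    (commutator Q).FiniteIndex := by
  have : Group.FG (Abelianization Q) := QuotientGroup.fg _
  obtain ⟨r, ι, _, p, hp, e, ⟨f⟩⟩ :=
    AddCommGroup.equiv_free_prod_directSum_zmod (Additive (Abelianization Q))
  have hr : r = 0 := by
    by_contra hr
    let i0 : Fin r := ⟨0, Nat.pos_of_ne_zero hr⟩
    let φ : Q → ℝ := fun q => (((f (Additive.ofMul (Abelianization.of q))).1 i0 : ℤ) : ℝ)
    have hφ := h φ (fun a b => by simp [φ])
    obtain ⟨a, ha⟩ := f.surjective (Finsupp.single i0 1, 0)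
    obtain ⟨q, hq⟩ := QuotientGroup.mk_surjective (s := commutator Q) a.toMul
    have h1 := hφ q
    have h2 : Additive.ofMul (Abelianization.of q) = a := by
      rw [← ofMul_toMul a, ← hq]; rfl
    simp only [φ, h2, ha] at h1
    simp at h1
  subst hr
  have hz : ∀ i, NeZero (p i ^ e i) := fun i => ⟨pow_ne_zero _ (hp i).ne_zero⟩
  have hfin : Finite (DirectSum ι fun i => ZMod (p i ^ e i)) :=
    Finite.of_equiv _ (DirectSum.addEquivProd (fun i => ZMod (p i ^ e i))).symm.toEquiv
  have hfin2 : Finite (Fin 0 →₀ ℤ) := inferInstance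
  have hfin3 : Finite (Additive (Abelianization Q)) := Finite.of_equiv _ f.symm.toEquiv
  have hfin4 : Finite (Q ⧸ commutator Q) := hfin3
  exact Subgroup.finiteIndex_of_finite_quotient

theorem transfer_zero {F : Type*} [Group F] (S : Set F) (hS : Subgroup.closure S = ⊤)
    (W : Subgroup F) [W.FiniteIndex] (φ : F → ℝ)
    (hadd : ∀ a ∈ W, ∀ b ∈ W, φ (a * b) = φ a + φ b)
    (hconj : ∀ g ∈ S, (∀ w ∈ W, g * w * g⁻¹ ∈ W ∧ φ (g * w * g⁻¹) = φ w) ∧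
      (∀ w ∈ W, g⁻¹ * w * g ∈ W))
    (M : ℕ) (hM : 0 < M) (hSM : ∀ x ∈ S, x ^ M ∈ W ∧ φ (x ^ M) = 0) :
    ∀ w ∈ W, φ w = 0 := by
  classical
  have hall : ∀ g : F, (∀ w ∈ W, g * w * g⁻¹ ∈ W ∧ φ (g * w * g⁻¹) = φ w) ∧
      (∀ w ∈ W, g⁻¹ * w * g ∈ W) := by
    intro g
    have hg : g ∈ Subgroup.closure S := hS ▸ Subgroup.mem_top g
    induction hg using Subgroup.closure_induction with
    | mem x hx => exact hconj x hx
    | one => simp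
    | mul x y _ _ hx hy =>
      refine ⟨fun w hw => ?_, fun w hw => ?_⟩
      · have e : x * y * w * (x * y)⁻¹ = x * (y * w * y⁻¹) * x⁻¹ := by group
        rw [e]
        exact ⟨(hx.1 _ (hy.1 w hw).1).1, (hx.1 _ (hy.1 w hw).1).2.trans (hy.1 w hw).2⟩
      · have e : (x * y)⁻¹ * w * (x * y) = y⁻¹ * (x⁻¹ * w * x) * y := by group
        rw [e]
        exact hy.2 _ (hx.2 w hw)
    | inv x _ hx =>
      refine ⟨fun w hw => ?_, fun w hw => ?_⟩
      · rw [inv_inv]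
        refine ⟨hx.2 w hw, ?_⟩
        have := (hx.1 _ (hx.2 w hw)).2
        rw [← this]
        congr 1; group
      · rw [inv_inv]; exact (hx.1 w hw).1
  have hpow : ∀ w ∈ W, ∀ m : ℕ, φ (w ^ m) = m * φ w := by
    intro w hw m
    induction m with
    | zero =>
      have := hadd 1 W.one_mem 1 W.one_mem
      rw [mul_one] at this
      simp; linarith
    | succ m ih =>
      rw [pow_succ, hadd _ (W.pow_mem hw m) _ hw, ih]
      push_cast; ring
  let ψ : W →* Multiplicative ℝ :=
    MonoidHom.mk' (fun w => Multiplicative.ofAdd (φ w)) (fun a b => by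
      rw [Subgroup.coe_mul, hadd _ a.2 _ b.2]; rfl)
  have hval : ∀ g : F, Multiplicative.toAdd (ψ.transfer g) = 0 := by
    have hgen : ∀ g ∈ S, ψ.transfer g = 1 := by
      intro g hg
      have := W.fintypeQuotientOfFiniteIndex
      have := Fintype.ofFinite (Quotient (MulAction.orbitRel (Subgroup.zpowers g) (F ⧸ W)))
      rw [MonoidHom.transfer_eq_prod_quotient_orbitRel_zpowers_quot]
      refine Finset.prod_eq_one fun q _ => ?_
      set m := Function.minimalPeriod (g • ·) q.out
      have hmem := QuotientGroup.out_conj_pow_minimalPeriod_mem W g q.out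
      show Multiplicative.ofAdd (φ (q.out.out⁻¹ * g ^ m * q.out.out)) = 1
      have h1 := (hall q.out.out).1 _ hmem
      have e : q.out.out * (q.out.out⁻¹ * g ^ m * q.out.out) * q.out.out⁻¹ = g ^ m := by group
      rw [e] at h1
      rw [← h1.2]
      have h2 := hpow _ h1.1 M
      rw [← pow_mul, mul_comm, pow_mul, hpow _ (hSM g hg).1, (hSM g hg).2, mul_zero] at h2
      have h3 : φ (g ^ m) = 0 := by
        rcases mul_eq_zero.1 h2.symm with h | h
        · exact absurd h (by exact_mod_cast hM.ne')
        · exact h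
      rw [h3]; rfl
    have : ψ.transfer = 1 := by
      apply MonoidHom.eq_of_eqOn_dense hS
      intro x hx
      simpa using hgen x hx
    intro g
    rw [this]; rfl
  intro w hw
  have h0 := hval w
  have := W.fintypeQuotientOfFiniteIndex
  have := Fintype.ofFinite (Quotient (MulAction.orbitRel (Subgroup.zpowers w) (F ⧸ W)))
  rw [MonoidHom.transfer_eq_prod_quotient_orbitRel_zpowers_quot] at h0
  have hterm : ∀ q : Quotient (MulAction.orbitRel (Subgroup.zpowers w) (F ⧸ W)),
      ψ ⟨q.out.out⁻¹ * w ^ Function.minimalPeriod (w • ·) q.out * q.out.out,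
        QuotientGroup.out_conj_pow_minimalPeriod_mem W w q.out⟩ =
      Multiplicative.ofAdd ((Function.minimalPeriod (w • ·) q.out : ℕ) * φ w) := by
    intro q
    have hmem := QuotientGroup.out_conj_pow_minimalPeriod_mem W w q.out
    have h1 := (hall q.out.out).1 _ hmem
    show Multiplicative.ofAdd (φ (q.out.out⁻¹ * _ * q.out.out)) = _
    rw [← h1.2, ← hpow w hw]
    congr 2
    group
  simp_rw [hterm] at h0
  rw [toAdd_prod] at h0
  simp only [toAdd_ofAdd] at h0
  rw [← Finset.sum_mul] at h0
  rcases mul_eq_zero.1 h0 with h | h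
  · exfalso
    rw [Finset.sum_eq_zero_iff_of_nonneg (fun _ _ => by positivity)] at h
    let q0 : Quotient (MulAction.orbitRel (Subgroup.zpowers w) (F ⧸ W)) :=
      Quotient.mk _ (QuotientGroup.mk 1)
    have h1 := h q0 (Finset.mem_univ _)
    have h2 : Function.minimalPeriod (w • ·) q0.out = 0 := by exact_mod_cast h1
    have h3 : 0 < Function.minimalPeriod (w • ·) q0.out := by
      rw [Function.minimalPeriod_pos_iff_mem_periodicPts]
      exact (MulAction.injective w).mem_periodicPts _
    omega
  · exact h

theorem comap_fi {A B : Type*} [Group A] [Group B] (f : A →* B) (H : Subgroup B) [H.FiniteIndex] :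
    (H.comap f).FiniteIndex := ⟨by
  rw [Subgroup.index_comap]
  intro h
  refine Subgroup.FiniteIndex.index_ne_zero (H := H) ?_
  rw [← Subgroup.relIndex_top_right]
  exact Subgroup.relIndex_eq_zero_of_le_right le_top h⟩

section addQ
variable {G : Type*} [Group G] {Q : Subgroup G} {φ : G → ℝ}

theorem addQ_one (hadd : ∀ a ∈ Q, ∀ b ∈ Q, φ (a * b) = φ a + φ b) : φ 1 = 0 := by
  have := hadd 1 Q.one_mem 1 Q.one_mem
  rw [mul_one] at this
  linarith

theorem addQ_inv (hadd : ∀ a ∈ Q, ∀ b ∈ Q, φ (a * b) = φ a + φ b) {a : G} (ha : a ∈ Q) :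
    φ a⁻¹ = - φ a := by
  have := hadd a ha a⁻¹ (Q.inv_mem ha)
  rw [mul_inv_cancel, addQ_one hadd] at this
  linarith

theorem addQ_conj (hadd : ∀ a ∈ Q, ∀ b ∈ Q, φ (a * b) = φ a + φ b) {a b : G} (ha : a ∈ Q)
    (hb : b ∈ Q) : φ (a * b * a⁻¹) = φ b := by
  rw [hadd _ (Q.mul_mem ha hb) _ (Q.inv_mem ha), hadd _ ha _ hb, addQ_inv hadd ha]
  ring

theorem addQ_pow (hadd : ∀ a ∈ Q, ∀ b ∈ Q, φ (a * b) = φ a + φ b) {a : G} (ha : a ∈ Q) (m : ℕ) :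
    φ (a ^ m) = m * φ a := by
  induction m with
  | zero => simp [addQ_one hadd]
  | succ m ih =>
    rw [pow_succ, hadd _ (Q.pow_mem ha m) _ ha, ih]
    push_cast; ring
end addQ

/-- one sided transvections -/
def SS {n : ℕ} (i : Fin n) (s : Bool) : FreeGrp n →* AutF n := (BB i).comp (side s)

theorem SS_eq {n : ℕ} (i : Fin n) (s : Bool) (w : FreeGrp n) : SS i s w = BB i (side s w) := rfl

theorem SS_false {n : ℕ} (i : Fin n) (w : FreeGrp n) : SS i false w = BB i (1, w) := by
  simp [SS, side]

theorem SS_true {n : ℕ} (i : Fin n) (w : FreeGrp n) : SS i true w = BB i (w, 1) := by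
  simp [SS, side]

theorem DD_SS {n : ℕ} (i : Fin n) (s : Bool) (g y : FreeGrp n) :
    DD i g * SS i s y * (DD i g)⁻¹ = SS i s (g * y * g⁻¹) := by
  simp only [DD, SS_eq]
  rw [← side_conj, map_mul, map_mul, map_inv]

theorem DD_mul {n : ℕ} (i : Fin n) (g h : FreeGrp n) : DD i (g * h) = DD i g * DD i h := by
  simp only [DD]; rw [← map_mul]; rfl

theorem DD_inv {n : ℕ} (i : Fin n) (g : FreeGrp n) : DD i g⁻¹ = (DD i g)⁻¹ := by
  simp only [DD]; rw [← map_inv]; rfl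

theorem SS_conj {n : ℕ} {i l : Fin n} (hil : l ≠ i) (s : Bool) (q y : FreeGrp n)
    (hq : killL i q = q) :
    SS l false q * SS i s y * (SS l false q)⁻¹ = SS i s (SS l false q y) := by
  rw [SS_false, SS_eq i s y, BB_conj hil 1 q (map_one _) hq, side_map]
  rfl

theorem SS_self {n : ℕ} (l : Fin n) (q : FreeGrp n) (hq : killL l q = q) :
    SS l false q (FreeGroup.of l) = FreeGroup.of l * q := by
  rw [SS_false, BB_apply, Bfun_self, hq, map_one, inv_one, one_mul]

theorem SS_ne {n : ℕ} {l m : Fin n} (h : m ≠ l) (q : FreeGrp n) :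
    SS l false q (FreeGroup.of m) = FreeGroup.of m := by
  rw [SS_false, BB_apply, Bfun_ne h]

theorem W2_kill {n : ℕ} {i j k : Fin n} (hij : i ≠ j) (hik : i ≠ k) (w : FreeGrp n)
    (hw : w ∈ W2 j k) : killL i w = w :=
  W2_fix j k _ (killL_ne hij.symm) (killL_ne hik.symm) w hw

theorem mem_QQ_SS {n : ℕ} {L : Set (Fin n)} {P : Subgroup (AutF n)} {i j k : Fin n}
    (hi : i ∈ L) (hj : j ∈ L) (hk : k ∈ L) (hij : i ≠ j) (hik : i ≠ k) (hjk : j ≠ k)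
    {s : Bool} {w : FreeGrp n} (hw : w ∈ W2 j k) (h : SS i s w ∈ P) : SS i s w ∈ QQ L P := by
  cases s
  · rw [SS_false] at *
    exact mem_QQ hi hj hk hij hik hjk (one_mem _) hw h
  · rw [SS_true] at *
    exact mem_QQ hi hj hk hij hik hjk hw (one_mem _) h

/-- the good words -/
def WW {n : ℕ} (P : Subgroup (AutF n)) (i l : Fin n) (s : Bool) (j k : Fin n) :
    Subgroup (FreeGrp n) :=
  W2 j k ⊓ (P.comap (SS i s) ⊓ P.comap (SS l false))

theorem WW_symm {n : ℕ} (P : Subgroup (AutF n)) (i l : Fin n) (s : Bool) (j k : Fin n) :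
    WW P i l s j k = WW P i l s k j := by
  unfold WW; rw [W2_symm]

/-- distinct letters of `L` -/
structure Four {n : ℕ} (L : Set (Fin n)) (i j k l : Fin n) : Prop where
  hi : i ∈ L
  hj : j ∈ L
  hk : k ∈ L
  hl : l ∈ L
  ij : i ≠ j
  ik : i ≠ k
  il : i ≠ l
  jk : j ≠ k
  jl : j ≠ l
  kl : k ≠ l

theorem Four.symm {n : ℕ} {L : Set (Fin n)} {i j k l : Fin n} (h : Four L i j k l) :
    Four L i k j l := ⟨h.hi, h.hk, h.hj, h.hl, h.ik, h.ij, h.il, h.jk.symm, h.kl, h.jl⟩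

theorem WW_conj {n : ℕ} {L : Set (Fin n)} {P : Subgroup (AutF n)} (hP : StarH L P)
    {i j k l : Fin n} (h : Four L i j k l) (s : Bool) (w : FreeGrp n) (hw : w ∈ WW P i l s j k) :
    FreeGroup.of j * w * (FreeGroup.of j)⁻¹ ∈ WW P i l s j k ∧
    (FreeGroup.of j)⁻¹ * w * FreeGroup.of j ∈ WW P i l s j k := by
  obtain ⟨h1, h2, h3⟩ := hw
  have hj := W2_left j k
  refine ⟨⟨(W2 j k).mul_mem ((W2 j k).mul_mem hj h1) ((W2 j k).inv_mem hj), ?_, ?_⟩,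
    ⟨(W2 j k).mul_mem ((W2 j k).mul_mem ((W2 j k).inv_mem hj) h1) hj, ?_, ?_⟩⟩
  · show SS i s _ ∈ P
    rw [← DD_SS]
    exact (hP.nrm i j h.hi h.hj h.ij _ h2).1
  · show SS l false _ ∈ P
    rw [← DD_SS]
    exact (hP.nrm l j h.hl h.hj h.jl.symm _ h3).1
  · show SS i s _ ∈ P
    have := DD_SS i s (FreeGroup.of j)⁻¹ w
    rw [inv_inv] at this
    rw [← this, DD_inv, inv_inv]
    exact (hP.nrm i j h.hi h.hj h.ij _ h2).2
  · show SS l false _ ∈ P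
    have := DD_SS l false (FreeGroup.of j)⁻¹ w
    rw [inv_inv] at this
    rw [← this, DD_inv, inv_inv]
    exact (hP.nrm l j h.hl h.hj h.jl.symm _ h3).2

theorem step1 {n : ℕ} {L : Set (Fin n)} {P : Subgroup (AutF n)} (hP : StarH L P)
    {i j k l : Fin n} (h : Four L i j k l) (s : Bool) (φ : AutF n → ℝ)
    (hadd : ∀ a ∈ QQ L P, ∀ b ∈ QQ L P, φ (a * b) = φ a + φ b)
    (w : FreeGrp n) (hw : w ∈ WW P i l s j k) :
    φ (SS i s w) - 2 * φ (SS i s (FreeGroup.of j * w * (FreeGroup.of j)⁻¹)) +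
      φ (SS i s (FreeGroup.of j * (FreeGroup.of j * w * (FreeGroup.of j)⁻¹) *
        (FreeGroup.of j)⁻¹)) = 0 := by
  set t : FreeGrp n := FreeGroup.of j with ht
  set w1 := t * w * t⁻¹ with hw1
  set w2 := t * w1 * t⁻¹ with hw2
  have hw1m := (WW_conj hP h s w hw).1
  have hw2m := (WW_conj hP h s w1 hw1m).1
  rw [← ht] at hw1m hw2m
  have hQ : ∀ y ∈ WW P i l s j k, SS i s y ∈ QQ L P := fun y hy =>
    mem_QQ_SS h.hi h.hj h.hk h.ij h.ik h.jk hy.1 hy.2.1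
  have hQw := hQ w hw
  have hQw1 := hQ w1 hw1m
  have hQw2 := hQ w2 hw2m
  have hα : SS l false w ∈ QQ L P :=
    mem_QQ_SS h.hl h.hj h.hk h.jl.symm h.kl.symm h.jk hw.1 hw.2.2
  have hv : SS i s (vv l j) ∈ QQ L P :=
    mem_QQ_SS h.hi h.hl h.hj h.il h.ij h.jl.symm (vv_mem l j)
      (hP.cm i j l h.hi h.hj h.hl h.ij h.il h.jl s)
  have he : DD i (ee l j) ∈ QQ L P :=
    mem_QQ h.hi h.hl h.hj h.il h.ij h.jl.symm (ee_mem l j) (ee_mem l j)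
      (hP.em i j l h.hi h.hj h.hl h.ij h.il h.jl)
  have h1 := addQ_conj hadd hα hv
  rw [SS_conj h.il.symm s w _ (W2_kill h.ij h.ik w hw.1)] at h1
  have hαl : SS l false w (FreeGroup.of l) = FreeGroup.of l * w :=
    SS_self l w (W2_kill h.jl.symm h.kl.symm w hw.1)
  have hαt : SS l false w t = t := SS_ne h.jl w
  have hαe : SS l false w (ee l j) = w⁻¹ * ee l j * w1 := by
    simp only [ee, map_mul, map_inv, hαl, ← ht, hαt, hw1]
    group
  have hαv : SS l false w (vv l j) = w⁻¹ * (ee l j * (w1 * w2⁻¹) * (ee l j)⁻¹) * vv l j * w1 := by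
    simp only [vv, map_mul, map_inv, hαe, ← ht, hαt]
    simp only [hw2, hw1]
    group
  have hc := addQ_conj hadd he (mul_mem hQw1 (inv_mem hQw2))
  have hcm := mul_mem (mul_mem he (mul_mem hQw1 (inv_mem hQw2))) (inv_mem he)
  rw [← map_inv, ← map_mul, DD_SS] at hc hcm
  rw [hαv, map_mul, map_mul, map_mul, hadd _ _ _ hQw1, hadd _ _ _ hv, hadd _ _ _ hcm, hc,
    map_mul, hadd _ hQw1 _ (map_inv (SS i s) w2 ▸ inv_mem hQw2), map_inv, map_inv,
    addQ_inv hadd hQw, addQ_inv hadd hQw2] at h1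
  · linarith
  · exact map_inv (SS i s) w ▸ inv_mem hQw
  · exact mul_mem (map_inv (SS i s) w ▸ inv_mem hQw) hcm
  · exact mul_mem (mul_mem (map_inv (SS i s) w ▸ inv_mem hQw) hcm) hv

theorem step1b {n : ℕ} {L : Set (Fin n)} {P : Subgroup (AutF n)} (hP : StarH L P)
    {i j k l : Fin n} (h : Four L i j k l) (s : Bool) (φ : AutF n → ℝ)
    (hadd : ∀ a ∈ QQ L P, ∀ b ∈ QQ L P, φ (a * b) = φ a + φ b)
    (M : ℕ) (hM : 0 < M) (hMP : ∀ i j k, i ∈ L → j ∈ L → k ∈ L → i ≠ j → i ≠ k → j ≠ k →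
      ∀ u ∈ W2 j k, ∀ v ∈ W2 j k, BB i (u ^ M, v ^ M) ∈ P)
    (w : FreeGrp n) (hw : w ∈ WW P i l s j k) :
    φ (SS i s (FreeGroup.of j * w * (FreeGroup.of j)⁻¹)) = φ (SS i s w) := by
  set t : FreeGrp n := FreeGroup.of j with ht
  let f : ℕ → FreeGrp n := fun r => t ^ r * w * (t ^ r)⁻¹
  have hfs : ∀ r, f (r + 1) = t * f r * t⁻¹ := by
    intro r; simp only [f, pow_succ']; group
  have hf0 : f 0 = w := by simp [f]
  have hfW : ∀ r, f r ∈ WW P i l s j k := by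
    intro r
    induction r with
    | zero => rw [hf0]; exact hw
    | succ r ih => rw [hfs]; exact (WW_conj hP h s _ ih).1
  have hrec : ∀ r, φ (SS i s (f r)) - 2 * φ (SS i s (f (r + 1))) + φ (SS i s (f (r + 2))) = 0 := by
    intro r
    have := step1 hP h s φ hadd (f r) (hfW r)
    rw [← ht, ← hfs, ← hfs] at this
    exact this
  have hlin : ∀ r : ℕ, φ (SS i s (f r)) = φ (SS i s (f 0)) +
      r * (φ (SS i s (f 1)) - φ (SS i s (f 0))) ∧ φ (SS i s (f (r + 1))) = φ (SS i s (f 0)) +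
      (r + 1) * (φ (SS i s (f 1)) - φ (SS i s (f 0))) := by
    intro r
    induction r with
    | zero => simp
    | succ r ih =>
      refine ⟨by rw [ih.2]; push_cast; ring, ?_⟩
      have := hrec r
      rw [ih.1, ih.2] at this
      push_cast
      linarith
  have hper : φ (SS i s (f M)) = φ (SS i s (f 0)) := by
    rw [hf0]
    simp only [f]
    rw [← DD_SS]
    refine addQ_conj hadd ?_ (mem_QQ_SS h.hi h.hj h.hk h.ij h.ik h.jk hw.1 hw.2.1)
    have hj := W2_left j k
    exact mem_QQ h.hi h.hj h.hk h.ij h.ik h.jk (pow_mem hj M) (pow_mem hj M)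
      (hMP i j k h.hi h.hj h.hk h.ij h.ik h.jk _ hj _ hj)
  have h1 := (hlin M).1
  rw [hper] at h1
  have h2 : (M : ℝ) * (φ (SS i s (f 1)) - φ (SS i s (f 0))) = 0 := by linarith
  rcases mul_eq_zero.1 h2 with h3 | h3
  · exact absurd h3 (by exact_mod_cast hM.ne')
  · have e := hfs 0
    rw [zero_add, hf0] at e
    rw [hf0, e] at h3
    linarith

theorem pow_WW {n : ℕ} {L : Set (Fin n)} {P : Subgroup (AutF n)}
    {i j k l : Fin n} (h : Four L i j k l) (s : Bool)
    (M : ℕ) (hMP : ∀ i j k, i ∈ L → j ∈ L → k ∈ L → i ≠ j → i ≠ k → j ≠ k →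
      ∀ u ∈ W2 j k, ∀ v ∈ W2 j k, BB i (u ^ M, v ^ M) ∈ P)
    (w : FreeGrp n) (hw : w ∈ W2 j k) : w ^ M ∈ WW P i l s j k := by
  refine ⟨pow_mem hw M, ?_, ?_⟩
  · show SS i s _ ∈ P
    cases s
    · have := hMP i j k h.hi h.hj h.hk h.ij h.ik h.jk 1 (one_mem _) w hw
      rw [SS_false]; simpa using this
    · have := hMP i j k h.hi h.hj h.hk h.ij h.ik h.jk w hw 1 (one_mem _)
      rw [SS_true]; simpa using this
  · show SS l false _ ∈ P
    have := hMP l j k h.hl h.hj h.hk h.jl.symm h.kl.symm h.jk 1 (one_mem _) w hw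
    rw [SS_false]; simpa using this

theorem step2 {n : ℕ} {L : Set (Fin n)} {P : Subgroup (AutF n)} (hP : StarH L P)
    {i j k l : Fin n} (h : Four L i j k l) (s : Bool) (φ : AutF n → ℝ)
    (hadd : ∀ a ∈ QQ L P, ∀ b ∈ QQ L P, φ (a * b) = φ a + φ b)
    (M : ℕ) (hM : 0 < M) (hMP : ∀ i j k, i ∈ L → j ∈ L → k ∈ L → i ≠ j → i ≠ k → j ≠ k →
      ∀ u ∈ W2 j k, ∀ v ∈ W2 j k, BB i (u ^ M, v ^ M) ∈ P) :
    φ (SS i s (FreeGroup.of k ^ M)) = 0 := by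
  set t : FreeGrp n := FreeGroup.of j with ht
  set w0 : FreeGrp n := FreeGroup.of k ^ M with hw0
  have hQ : ∀ y ∈ WW P i l s j k, SS i s y ∈ QQ L P := fun y hy =>
    mem_QQ_SS h.hi h.hj h.hk h.ij h.ik h.jk hy.1 hy.2.1
  have hw0W : w0 ∈ WW P i l s j k := pow_WW h s M hMP _ (W2_right j k)
  have htW : t ^ M ∈ WW P i l s j k := pow_WW h s M hMP _ (W2_left j k)
  have hm : ∀ m : ℕ, ∃ p ∈ WW P i l s j k, φ (SS i s p) = m * φ (SS i s w0) ∧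
      (t * w0) ^ m = p * t ^ m := by
    intro m
    induction m with
    | zero => exact ⟨1, one_mem _, by simp [addQ_one hadd], by simp⟩
    | succ m ih =>
      obtain ⟨p, hp, hp1, hp2⟩ := ih
      refine ⟨t * (w0 * p) * t⁻¹, (WW_conj hP h s _ (mul_mem hw0W hp)).1, ?_, ?_⟩
      · rw [ht, step1b hP h s φ hadd M hM hMP _ (mul_mem hw0W hp), map_mul,
          hadd _ (hQ _ hw0W) _ (hQ _ hp), hp1]
        push_cast; ring
      · rw [pow_succ', hp2, pow_succ']; group
  obtain ⟨p, hp, hp1, hp2⟩ := hm M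
  have hα : SS j false w0 ∈ QQ L P := by
    refine mem_QQ_SS h.hj h.hk h.hl h.jk h.jl h.kl (pow_mem (W2_left k l) M) ?_
    have := hMP j k l h.hj h.hk h.hl h.jk h.jl h.kl 1 (one_mem _) _ (W2_left k l)
    rw [SS_false]; simpa using this
  have h1 := addQ_conj hadd hα (hQ _ htW)
  have hk0 : ∀ a, a ≠ k → killL a w0 = w0 := by
    intro a ha
    rw [hw0, map_pow, killL_ne ha.symm]
  rw [SS_conj h.ij.symm s w0 _ (hk0 i h.ik), map_pow, ht, SS_self j w0 (hk0 j h.jk), ← ht, hp2,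
    map_mul, hadd _ (hQ _ hp) _ (hQ _ htW), hp1] at h1
  have h2 : (M : ℝ) * φ (SS i s w0) = 0 := by linarith
  rcases mul_eq_zero.1 h2 with h3 | h3
  · exact absurd h3 (by exact_mod_cast hM.ne')
  · exact h3

theorem step3 {n : ℕ} {L : Set (Fin n)} {P : Subgroup (AutF n)} (hP : StarH L P)
    {i j k l : Fin n} (h : Four L i j k l) (s : Bool) (φ : AutF n → ℝ)
    (hadd : ∀ a ∈ QQ L P, ∀ b ∈ QQ L P, φ (a * b) = φ a + φ b)
    (M : ℕ) (hM : 0 < M) (hMP : ∀ i j k, i ∈ L → j ∈ L → k ∈ L → i ≠ j → i ≠ k → j ≠ k →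
      ∀ u ∈ W2 j k, ∀ v ∈ W2 j k, BB i (u ^ M, v ^ M) ∈ P) :
    ∀ w ∈ WW P i l s j k, φ (SS i s w) = 0 := by
  have hQ : ∀ y ∈ WW P i l s j k, SS i s y ∈ QQ L P := fun y hy =>
    mem_QQ_SS h.hi h.hj h.hk h.ij h.ik h.jk hy.1 hy.2.1
  let W : Subgroup (FreeGroup Bool) := (WW P i l s j k).comap (iot j k)
  have hfi : W.FiniteIndex := by
    have f1 : (P.comap (bmap i j k)).FiniteIndex := ⟨hP.fi i j k h.hi h.hj h.hk h.ij h.ik h.jk⟩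
    have f2 : (P.comap (bmap l j k)).FiniteIndex :=
      ⟨hP.fi l j k h.hl h.hj h.hk h.jl.symm h.kl.symm h.jk⟩
    let sd : FreeGroup Bool →* FreeGroup Bool × FreeGroup Bool :=
      if s then MonoidHom.inl _ _ else MonoidHom.inr _ _
    have g1 : ((P.comap (bmap i j k)).comap sd).FiniteIndex := comap_fi _ _
    have g2 : ((P.comap (bmap l j k)).comap
      (MonoidHom.inr (FreeGroup Bool) (FreeGroup Bool))).FiniteIndex := comap_fi _ _
    have g3 : ((P.comap (bmap i j k)).comap sd ⊓ (P.comap (bmap l j k)).comap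
      (MonoidHom.inr (FreeGroup Bool) (FreeGroup Bool))).FiniteIndex := inferInstance
    refine @Subgroup.finiteIndex_of_le _ _ _ W g3 ?_
    rintro x ⟨hx1, hx2⟩
    refine ⟨?_, ?_, ?_⟩
    · show iot j k x ∈ W2 j k
      rw [← iot_range]; exact ⟨x, rfl⟩
    · show SS i s (iot j k x) ∈ P
      have hx1' : bmap i j k (sd x) ∈ P := hx1
      rw [bmap_apply] at hx1'
      cases s
      · rw [SS_false]; simpa [sd] using hx1'
      · rw [SS_true]; simpa [sd] using hx1'
    · show SS l false (iot j k x) ∈ P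
      have hx2' : bmap l j k (1, x) ∈ P := hx2
      rw [bmap_apply] at hx2'
      rw [SS_false]; simpa using hx2'
  have hj : iot j k (FreeGroup.of true) = FreeGroup.of j := by simp [iot]
  have hk : iot j k (FreeGroup.of false) = FreeGroup.of k := by simp [iot]
  have key := transfer_zero (Set.range (FreeGroup.of (α := Bool))) (FreeGroup.closure_range_of Bool)
    W (fun x => φ (SS i s (iot j k x))) ?_ ?_ M hM ?_
  · intro w hw
    have hw1 := hw.1
    rw [← iot_range] at hw1
    obtain ⟨x, rfl⟩ := hw1
    exact key x hw
  · intro a ha b hb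
    simp only [map_mul]
    exact hadd _ (hQ _ ha) _ (hQ _ hb)
  · rintro _ ⟨b, rfl⟩
    cases b
    · refine ⟨fun w hw => ?_, fun w hw => ?_⟩
      · have hw2 : iot j k w ∈ WW P i l s k j := by rw [WW_symm]; exact hw
        refine ⟨?_, ?_⟩
        · show iot j k _ ∈ WW P i l s j k
          rw [map_mul, map_mul, map_inv, hk, WW_symm]
          exact (WW_conj hP h.symm s _ hw2).1
        · show φ (SS i s (iot j k _)) = _
          rw [map_mul (iot j k), map_mul (iot j k), map_inv (iot j k), hk]
          exact step1b hP h.symm s φ hadd M hM hMP _ hw2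
      · have hw2 : iot j k w ∈ WW P i l s k j := by rw [WW_symm]; exact hw
        show iot j k _ ∈ WW P i l s j k
        rw [map_mul, map_mul, map_inv, hk, WW_symm]
        exact (WW_conj hP h.symm s _ hw2).2
    · refine ⟨fun w hw => ?_, fun w hw => ?_⟩
      · refine ⟨?_, ?_⟩
        · show iot j k _ ∈ WW P i l s j k
          rw [map_mul, map_mul, map_inv, hj]
          exact (WW_conj hP h s _ hw).1
        · show φ (SS i s (iot j k _)) = _
          rw [map_mul (iot j k), map_mul (iot j k), map_inv (iot j k), hj]
          exact step1b hP h s φ hadd M hM hMP _ hw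
      · show iot j k _ ∈ WW P i l s j k
        rw [map_mul, map_mul, map_inv, hj]
        exact (WW_conj hP h s _ hw).2
  · rintro _ ⟨b, rfl⟩
    cases b
    · refine ⟨?_, ?_⟩
      · show iot j k _ ∈ WW P i l s j k
        rw [map_pow, hk]
        exact pow_WW h s M hMP _ (W2_right j k)
      · show φ (SS i s (iot j k _)) = _
        rw [map_pow (iot j k), hk]
        exact step2 hP h s φ hadd M hM hMP
    · refine ⟨?_, ?_⟩
      · show iot j k _ ∈ WW P i l s j k
        rw [map_pow, hj]
        exact pow_WW h s M hMP _ (W2_left j k)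
      · show φ (SS i s (iot j k _)) = _
        rw [map_pow (iot j k), hj]
        exact step2 hP h.symm s φ hadd M hM hMP

theorem QQ_noHom {n : ℕ} {L : Set (Fin n)} {P : Subgroup (AutF n)} (hP : StarH L P)
    (hL : ∀ i j k, i ∈ L → j ∈ L → k ∈ L → ∃ l ∈ L, i ≠ l ∧ j ≠ l ∧ k ≠ l) :
    NoHom (QQ L P) := by
  classical
  intro φ0 hφ0
  let φ : AutF n → ℝ := fun g => if hg : g ∈ QQ L P then φ0 ⟨g, hg⟩ else 0
  have hφv : ∀ g (hg : g ∈ QQ L P), φ g = φ0 ⟨g, hg⟩ := fun g hg => by simp [φ, hg]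
  have hadd : ∀ a ∈ QQ L P, ∀ b ∈ QQ L P, φ (a * b) = φ a + φ b := by
    intro a ha b hb
    rw [hφv a ha, hφv b hb, hφv _ (mul_mem ha hb), ← hφ0]
    rfl
  obtain ⟨M, hM, hMP⟩ := starH_pow hP
  let R : Subgroup (AutF n) :=
    { carrier := {g | g ∈ QQ L P ∧ φ g = 0}
      one_mem' := ⟨one_mem _, addQ_one hadd⟩
      mul_mem' := fun {a b} ha hb => ⟨mul_mem ha.1 hb.1, by rw [hadd _ ha.1 _ hb.1, ha.2, hb.2, add_zero]⟩
      inv_mem' := fun {a} ha => ⟨inv_mem ha.1, by rw [addQ_inv hadd ha.1, ha.2, neg_zero]⟩ }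
  have hR : QQ L P ≤ R := by
    apply QQ_induct
    intro i j k hi hj hk hij hik hjk u hu v hv huv
    obtain ⟨l, hl, hil, hjl, hkl⟩ := hL i j k hi hj hk
    have h4 : Four L i j k l := ⟨hi, hj, hk, hl, hij, hik, hil, hjk, hjl, hkl⟩
    have hQ := mem_QQ hi hj hk hij hik hjk hu hv huv
    refine ⟨hQ, ?_⟩
    have hu' := pow_WW h4 true M hMP u hu
    have hv' := pow_WW h4 false M hMP v hv
    have e1 := step3 hP h4 true φ hadd M hM hMP _ hu'
    have e2 := step3 hP h4 false φ hadd M hM hMP _ hv'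
    have e3 := addQ_pow hadd hQ M
    have e4 : BB i (u, v) ^ M = SS i true (u ^ M) * SS i false (v ^ M) := by
      rw [SS_true, SS_false, ← map_mul, ← map_pow]
      simp
    rw [e4, hadd _ (mem_QQ_SS hi hj hk hij hik hjk hu'.1 hu'.2.1) _
      (mem_QQ_SS hi hj hk hij hik hjk hv'.1 hv'.2.1), e1, e2, add_zero] at e3
    rcases mul_eq_zero.1 e3.symm with h3 | h3
    · exact absurd h3 (by exact_mod_cast hM.ne')
    · exact h3
  rintro ⟨a, ha⟩
  rw [← hφv a ha]
  exact (hR ha).2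

theorem comm_mem2 {G : Type*} [Group G] {H : Subgroup G} {a b : G} (ha : a ∈ H) (hb : b ∈ H) :
    a * b * a⁻¹ * b⁻¹ ∈ ⁅H, H⁆ := Subgroup.commutator_mem_commutator ha hb

theorem ee_ab {n : ℕ} (l j : Fin n) : Abelianization.of (ee l j) = 1 := by
  simp only [ee, map_mul, map_inv]
  rw [mul_right_comm, mul_right_comm, mul_comm]
  simp

theorem vv_ab {n : ℕ} (l j : Fin n) : Abelianization.of (vv l j) = 1 := by
  simp only [vv, map_mul, map_inv, ee_ab]
  simp

theorem SS_IA {n : ℕ} (i : Fin n) (s : Bool) (w : FreeGrp n) (hw : Abelianization.of w = 1) :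
    SS i s w ∈ IA n := by
  cases s
  · rw [SS_false]; exact BB_IA i _ _ (by rw [hw, map_one])
  · rw [SS_true]; exact BB_IA i _ _ (by rw [hw, map_one])

theorem DD_IA {n : ℕ} (i : Fin n) (w : FreeGrp n) : DD i w ∈ IA n := BB_IA i _ _ rfl

theorem star_first {n : ℕ} (L : Set (Fin n)) (Γ : Subgroup (AutF n)) [Γ.FiniteIndex]
    (hIA : IA n ≤ Γ) : StarH L Γ where
  fi := fun i j k _ _ _ _ _ _ => (comap_fi (bmap i j k) Γ).index_ne_zero
  nrm := fun i j _ _ _ p hp =>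
    ⟨mul_mem (mul_mem (hIA (DD_IA i _)) hp) (inv_mem (hIA (DD_IA i _))),
      mul_mem (mul_mem (inv_mem (hIA (DD_IA i _))) hp) (hIA (DD_IA i _))⟩
  cm := fun i j l _ _ _ _ _ _ s => hIA (SS_IA i s _ (vv_ab l j))
  em := fun i j l _ _ _ _ _ _ => hIA (DD_IA i _)

theorem star_second {n : ℕ} (L : Set (Fin n)) (Γ : Subgroup (AutF n)) [Γ.FiniteIndex]
    (hIA : IA n ≤ Γ)
    (hL : ∀ i j k, i ∈ L → j ∈ L → k ∈ L → ∃ l ∈ L, i ≠ l ∧ j ≠ l ∧ k ≠ l) :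
    StarH L ⁅QQ L Γ, QQ L Γ⁆ := by
  have h1 := star_first L Γ hIA
  have hDD : ∀ i j, i ∈ L → j ∈ L → i ≠ j → DD i (FreeGroup.of j) ∈ QQ L Γ := by
    intro i j hi hj hij
    obtain ⟨k, hk, hik, hjk, _⟩ := hL i j j hi hj hj
    exact mem_QQ hi hj hk hij hik hjk (W2_left j k) (W2_left j k) (hIA (DD_IA i _))
  have hrel : (⁅QQ L Γ, QQ L Γ⁆).relIndex (QQ L Γ) ≠ 0 := by
    have hfg : Group.FG (QQ L Γ) := (Group.fg_iff_subgroup_fg _).2 (QQ_fg h1)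
    have hfin := finite_abelianization (QQ_noHom h1 hL)
    rw [Subgroup.relIndex, ← Subgroup.map_subtype_commutator, Subgroup.subgroupOf,
      Subgroup.comap_map_eq_self_of_injective (Subgroup.subtype_injective _)]
    exact hfin.index_ne_zero
  refine ⟨?_, ?_, ?_, ?_⟩
  · intro i j k hi hj hk hij hik hjk
    have hle : (Γ.comap (bmap i j k)).map (bmap i j k) ≤ QQ L Γ :=
      le_iSup (fun t : Trip L => (Γ.comap (bmap t.1.1 t.1.2.1 t.1.2.2)).map
        (bmap t.1.1 t.1.2.1 t.1.2.2)) ⟨(i, j, k), hi, hj, hk, hij, hik, hjk⟩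
    have ha : (Subgroup.comap (bmap i j k) ⁅QQ L Γ, QQ L Γ⁆).relIndex (Γ.comap (bmap i j k)) ≠ 0 := by
      rw [Subgroup.relIndex_comap]
      exact fun h => hrel (Subgroup.relIndex_eq_zero_of_le_right hle h)
    have hb := h1.fi i j k hi hj hk hij hik hjk
    have hle2 : Subgroup.comap (bmap i j k) ⁅QQ L Γ, QQ L Γ⁆ ≤ Γ.comap (bmap i j k) :=
      Subgroup.comap_mono ((Subgroup.commutator_le_self _).trans (QQ_le L Γ))
    rw [← Subgroup.relIndex_mul_index hle2]
    exact mul_ne_zero ha hb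
  · intro i j hi hj hij p hp
    have hd := hDD i j hi hj hij
    have hpQ : p ∈ QQ L Γ := Subgroup.commutator_le_self _ hp
    constructor
    · have := mul_mem (comm_mem2 hd hpQ) hp
      rwa [inv_mul_cancel_right] at this
    · have := mul_mem (comm_mem2 (inv_mem hd) hpQ) hp
      rwa [inv_mul_cancel_right, inv_inv] at this
  · intro i j l hi hj hl hij hil hjl s
    have ha : SS i s (ee l j) ∈ QQ L Γ :=
      mem_QQ_SS hi hl hj hil hij hjl.symm (ee_mem l j) (hIA (SS_IA i s _ (ee_ab l j)))
    have hb := hDD i j hi hj hij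
    have hc := comm_mem2 ha hb
    have e : BB i (side s (vv l j)) = SS i s (ee l j) * DD i (FreeGroup.of j) * (SS i s (ee l j))⁻¹ * (DD i (FreeGroup.of j))⁻¹ := by
      rw [mul_assoc, mul_assoc, ← mul_assoc (DD i _), ← map_inv, DD_SS,
        ← map_mul]
      show SS i s _ = _
      congr 1
    rw [e]; exact hc
  · intro i j l hi hj hl hij hil hjl
    have ha := inv_mem (hDD i l hi hl hil)
    have hb := hDD i j hi hj hij
    have hc := comm_mem2 ha hb
    have e : DD i (ee l j) = (DD i (FreeGroup.of l))⁻¹ * DD i (FreeGroup.of j) * ((DD i (FreeGroup.of l))⁻¹)⁻¹ *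
        (DD i (FreeGroup.of j))⁻¹ := by
      simp only [ee, DD_mul, DD_inv, inv_inv]
    rw [e]; exact hc

theorem QQ_nontriv {n : ℕ} {L : Set (Fin n)} {P : Subgroup (AutF n)} (hP : StarH L P)
    {i j k l : Fin n} (h : Four L i j k l) : ∃ q ∈ QQ L P, q ≠ 1 := by
  obtain ⟨M, hM, hMP⟩ := starH_pow hP
  have h1 := pow_WW h false M hMP _ (W2_left j k)
  refine ⟨_, mem_QQ_SS h.hi h.hj h.hk h.ij h.ik h.jk h1.1 h1.2.1, fun h2 => ?_⟩
  have h3 := SS_self i (FreeGroup.of j ^ M) (W2_kill h.ij h.ik _ h1.1)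
  rw [h2] at h3
  have h4 : (FreeGroup.of j : FreeGrp n) ^ M = 1 := by
    have : (FreeGroup.of i : FreeGrp n) = FreeGroup.of i * FreeGroup.of j ^ M := h3
    exact (left_eq_mul.1 this)
  let f : FreeGrp n →* Multiplicative ℤ :=
    FreeGroup.lift (fun _ : Fin n => Multiplicative.ofAdd (1 : ℤ))
  have hf : f (FreeGroup.of j) = Multiplicative.ofAdd (1 : ℤ) := FreeGroup.lift_apply_of
  have h5 : f (FreeGroup.of j) ^ M = 1 := by rw [← map_pow, h4, map_one]
  rw [hf, ← ofAdd_nsmul, ofAdd_eq_one] at h5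
  simp at h5
  omega

theorem QQ_commute {n : ℕ} {L L' : Set (Fin n)} {P P' : Subgroup (AutF n)}
    (hd : ∀ i ∈ L, ∀ j ∈ L', i ≠ j) : ∀ a ∈ QQ L P, ∀ b ∈ QQ L' P', a * b = b * a := by
  have key : QQ L P ≤ Subgroup.centralizer (QQ L' P' : Set (AutF n)) := by
    apply QQ_induct
    intro i j k hi hj hk hij hik hjk u hu v hv _
    rw [Subgroup.mem_centralizer_iff]
    have : QQ L' P' ≤ Subgroup.centralizer {BB i (u, v)} := by
      apply QQ_induct
      intro i' j' k' hi' hj' hk' hij' hik' hjk' u' hu' v' hv' _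
      rw [Subgroup.mem_centralizer_iff]
      rintro _ rfl
      have hfix : ∀ y ∈ W2 j k, BB i' (u', v') y = y := fun y hy =>
        W2_fix j k (Bfun i' u' v') (Bfun_ne (hd j hj i' hi') _ _) (Bfun_ne (hd k hk i' hi') _ _) y hy
      have hkill : ∀ y ∈ W2 j' k', killL i y = y := fun y hy =>
        W2_kill (hd i hi j' hj') (hd i hi k' hk') y hy
      have := BB_conj (hd i hi i' hi').symm u' v' (hkill _ hu') (hkill _ hv') (u, v)
      rw [hfix u hu, hfix v hv, mul_inv_eq_iff_eq_mul] at this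
      exact this.symm
    intro b hb
    exact (Subgroup.mem_centralizer_iff.1 (this hb) _ rfl).symm
  intro a ha b hb
  exact (Subgroup.mem_centralizer_iff.1 (key ha) b hb).symm

theorem block_four {n : ℕ} (hn : 8 ≤ n) (c : ℕ) (hc : c ≤ 4) (i j k : Fin n) :
    ∃ l ∈ {m : Fin n | c ≤ m.1 ∧ m.1 < c + 4}, i ≠ l ∧ j ≠ l ∧ k ≠ l := by
  have : ∃ m : ℕ, c ≤ m ∧ m < c + 4 ∧ i.1 ≠ m ∧ j.1 ≠ m ∧ k.1 ≠ m := by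
    by_contra h
    push Not at h
    have h0 := h c (by omega) (by omega)
    have h1 := h (c + 1) (by omega) (by omega)
    have h2 := h (c + 2) (by omega) (by omega)
    have h3 := h (c + 3) (by omega) (by omega)
    omega
  obtain ⟨m, h1, h2, h3, h4, h5⟩ := this
  exact ⟨⟨m, by omega⟩, ⟨h1, h2⟩, fun h => h3 (congrArg Fin.val h), fun h => h4 (congrArg Fin.val h),
    fun h => h5 (congrArg Fin.val h)⟩

theorem block_main {n : ℕ} (hn : 8 ≤ n) (Γ : Subgroup (AutF n)) [Γ.FiniteIndex]
    (hIA : IA n ≤ Γ) (c : ℕ) (hc : c ≤ 4) (L : Set (Fin n))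
    (hLc : L = {m : Fin n | c ≤ m.1 ∧ m.1 < c + 4}) :
    ∃ Q : Subgroup (AutF n), Q ≤ ⁅QQ L Γ, QQ L Γ⁆ ∧ Q.FG ∧ NoHom Q ∧ ∃ q ∈ Q, q ≠ 1 := by
  have hL : ∀ i j k, i ∈ L → j ∈ L → k ∈ L → ∃ l ∈ L, i ≠ l ∧ j ≠ l ∧ k ≠ l := by
    intro i j k _ _ _
    rw [hLc]
    exact block_four hn c hc i j k
  have hS := star_second L Γ hIA hL
  have h4 : Four L ⟨c, by omega⟩ ⟨c + 1, by omega⟩ ⟨c + 2, by omega⟩ ⟨c + 3, by omega⟩ := by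
    constructor <;> simp [hLc]
  exact ⟨QQ L _, QQ_le _ _, QQ_fg hS, QQ_noHom hS hL, QQ_nontriv hS h4⟩


theorem lift_unique (F F0 : ℝ → ℝ) (hF : Continuous F) (hF0 : Continuous F0)
    (h : ∀ x, ((F x : ℝ) : 𝕊) = ((F0 x : ℝ) : 𝕊)) : ∃ k : ℤ, ∀ x, F x = F0 x + k := by
  have hd : ∀ x, ∃ k : ℤ, F x - F0 x = k := by
    intro x
    have h1 : ((F x - F0 x : ℝ) : 𝕊) = 0 := by
      rw [AddCircle.coe_sub, h x, sub_self]
    obtain ⟨k, hk⟩ := (AddCircle.coe_eq_zero_iff (1 : ℝ)).1 h1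
    exact ⟨k, by rw [← hk]; simp⟩
  have hdisc : DiscreteTopology (Set.range (Int.cast : ℤ → ℝ)) :=
    Int.isClosedEmbedding_coe_real.isEmbedding.toHomeomorph.symm.isEmbedding.discreteTopology
  obtain ⟨y, ⟨k, hk⟩, hy⟩ := isPreconnected_univ.eqOn_const_of_mapsTo
    (T := Set.range (Int.cast : ℤ → ℝ)) (f := fun x => F x - F0 x)
    ⟨hdisc⟩ (hF.sub hF0).continuousOn (fun x _ => by
      obtain ⟨k, hk⟩ := hd x
      exact ⟨k, hk.symm⟩) ⟨0, 0, by simp⟩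
  refine ⟨k, fun x => ?_⟩
  have h1 : F x - F0 x = y := hy (Set.mem_univ x)
  rw [hk]; linarith

theorem per_surj (F : ℝ → ℝ) (hc : Continuous F) (hm : StrictMono F)
    (hp : ∀ x, F (x + 1) = F x + 1) : Function.Surjective F := by
  have h1 : ∀ m : ℕ, F m = F 0 + m := by
    intro m
    induction m with
    | zero => simp
    | succ m ih => push_cast; rw [hp, ih]; ring
  have h2 : ∀ m : ℕ, F (-(m : ℝ)) = F 0 - m := by
    intro m
    induction m with
    | zero => simp
    | succ m ih =>
      have := hp (-((m : ℝ) + 1))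
      have e : -((m : ℝ) + 1) + 1 = -(m : ℝ) := by ring
      rw [e, ih] at this
      push_cast; linarith
  refine hc.surjective (tendsto_atTop_atTop_of_monotone hm.monotone fun b => ?_)
    (tendsto_atBot_atBot_of_monotone hm.monotone fun b => ?_)
  · obtain ⟨m, hm⟩ := exists_nat_ge (b - F 0)
    exact ⟨m, by rw [h1]; linarith⟩
  · obtain ⟨m, hm⟩ := exists_nat_ge (F 0 - b)
    exact ⟨-m, by rw [h2]; linarith⟩

/-- the group of all lifts -/
def LiftG {n : ℕ} {Γ : Subgroup (AutF n)} (ρ : Γ →* Equiv.Perm 𝕊) :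
    Subgroup (AutF n × (ℝ ≃o ℝ)) where
  carrier := {p | Per p.2 ∧ ∃ h : p.1 ∈ Γ, ∀ x : ℝ, ρ ⟨p.1, h⟩ (x : 𝕊) = ((p.2 x : ℝ) : 𝕊)}
  one_mem' := by
    refine ⟨fun x => rfl, Γ.one_mem, fun x => ?_⟩
    have : ρ ⟨(1 : AutF n × (ℝ ≃o ℝ)).1, Γ.one_mem⟩ = 1 := map_one ρ
    rw [this]; rfl
  mul_mem' := by
    rintro a b ⟨ha, ha1, ha2⟩ ⟨hb, hb1, hb2⟩
    refine ⟨fun x => ?_, Γ.mul_mem ha1 hb1, fun x => ?_⟩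
    · show a.2 (b.2 (x + 1)) = a.2 (b.2 x) + 1
      rw [hb, ha]
    · have : ρ ⟨(a * b).1, Γ.mul_mem ha1 hb1⟩ = ρ ⟨a.1, ha1⟩ * ρ ⟨b.1, hb1⟩ := by
        rw [← map_mul]; rfl
      rw [this]
      show ρ ⟨a.1, ha1⟩ (ρ ⟨b.1, hb1⟩ (x : 𝕊)) = ((a.2 (b.2 x) : ℝ) : 𝕊)
      rw [hb2, ha2]
  inv_mem' := by
    rintro a ⟨ha, ha1, ha2⟩
    have hi : ∀ x, a.2 (a.2⁻¹ x) = x := fun x => a.2.apply_symm_apply x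
    refine ⟨fun x => ?_, Γ.inv_mem ha1, fun x => ?_⟩
    · show a.2⁻¹ (x + 1) = a.2⁻¹ x + 1
      apply a.2.injective
      rw [hi, ha, hi]
    · have : ρ ⟨a⁻¹.1, Γ.inv_mem ha1⟩ = (ρ ⟨a.1, ha1⟩)⁻¹ := by
        rw [← map_inv]; rfl
      rw [this, Equiv.Perm.inv_eq_iff_eq]
      show (x : 𝕊) = ρ ⟨a.1, ha1⟩ ((a.2⁻¹ x : ℝ) : 𝕊)
      rw [ha2, hi]

section fin
variable {n : ℕ} {Γ : Subgroup (AutF n)} (ρ : Γ →* Equiv.Perm 𝕊)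

theorem LiftG_exists (hρ : ∀ g : Γ, IsC1Diffeo (ρ g)) (g : AutF n) (hg : g ∈ Γ) :
    ∃ F, (g, F) ∈ LiftG ρ := by
  obtain ⟨F, ⟨h1, h2, h3, h4⟩, -, -⟩ := hρ ⟨g, hg⟩
  exact ⟨StrictMono.orderIsoOfSurjective F h2 (per_surj F h1 h2 h3), h3, hg, h4⟩

theorem LiftG_C1 (hρ : ∀ g : Γ, IsC1Diffeo (ρ g)) (g : AutF n) (F : ℝ ≃o ℝ)
    (hF : (g, F) ∈ LiftG ρ) : ContDiff ℝ 1 F := by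
  obtain ⟨h1, h2, h3⟩ := hF
  obtain ⟨F0, ⟨g1, g2, g3, g4⟩, g5, -⟩ := hρ ⟨g, h2⟩
  obtain ⟨k, hk⟩ := lift_unique F F0 F.continuous g1 (fun x => by rw [← h3, ← g4])
  have : (F : ℝ → ℝ) = fun x => F0 x + k := funext hk
  rw [this]
  exact g5.add contDiff_const

theorem LiftG_unique (g : AutF n) (F F' : ℝ ≃o ℝ)
    (hF : (g, F) ∈ LiftG ρ) (hF' : (g, F') ∈ LiftG ρ) : ∃ k : ℤ, ∀ x, F x = F' x + k := by
  obtain ⟨_, h2, h3⟩ := hF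
  obtain ⟨_, h2', h3'⟩ := hF'
  exact lift_unique F F' F.continuous F'.continuous (fun x => by rw [← h3, ← h3'])

theorem LiftG_TT : ((1 : AutF n), TT) ∈ LiftG ρ := by
  refine ⟨fun x => rfl, Γ.one_mem, fun x => ?_⟩
  have : ρ ⟨1, Γ.one_mem⟩ = 1 := map_one ρ
  show ρ ⟨1, Γ.one_mem⟩ (x : 𝕊) = _
  rw [this, TT_apply, AddCircle.coe_add, AddCircle.coe_period, add_zero]
  rfl

theorem LiftG_comm (a b : AutF n) (hab : a * b = b * a) (F F' : ℝ ≃o ℝ)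
    (hF : (a, F) ∈ LiftG ρ) (hF' : (b, F') ∈ LiftG ρ) : F * F' = F' * F := by
  have h1 := mul_mem hF hF'
  have h2 := mul_mem hF' hF
  rw [Prod.mk_mul_mk] at h1 h2
  rw [← hab] at h2
  obtain ⟨k, hk⟩ := LiftG_unique ρ _ _ _ h1 h2
  have hk' : ∀ x, F (F' x) = F' (F x) + k := hk
  have hm : ∀ m : ℕ, ∀ x, (F ^ m) (F' x) = F' ((F ^ m) x) + (m * k : ℤ) := by
    intro m
    induction m with
    | zero => intro x; simp
    | succ m ih =>
      intro x
      rw [pow_succ']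
      show F ((F ^ m) (F' x)) = F' (F ((F ^ m) x)) + _
      rw [ih, hF.1.int, hk']
      push_cast; ring
  have hP4 : Per (F ^ 4) := (pow_mem hF 4).1
  obtain ⟨p, hp⟩ := hF'.1.disp
  have e := hm 4 0
  have b1 := (hp ((F ^ 4) 0)).1
  have b2 := (hp ((F ^ 4) 0)).2
  have b3 := (F ^ 4).monotone (hp 0).1
  have b4 := (F ^ 4).monotone (hp 0).2
  have e3 : (F ^ 4) (0 + (p : ℝ) - 1) = (F ^ 4) 0 + p - 1 := by
    have := hP4.int (p - 1) 0
    push_cast at this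
    rw [add_sub_assoc, this, add_sub_assoc]
  have e4 : (F ^ 4) (0 + (p : ℝ) + 2) = (F ^ 4) 0 + p + 2 := by
    have := hP4.int (p + 2) 0
    push_cast at this
    rw [add_assoc, this, add_assoc]
  rw [e3] at b3
  rw [e4] at b4
  have hk0 : k = 0 := by
    have c1 : ((4 : ℤ) * k : ℤ) ≤ 3 := by
      have : (((4 : ℤ) * k : ℤ) : ℝ) ≤ 3 := by push_cast at e ⊢; simp only at *; linarith
      exact_mod_cast this
    have c2 : (-3 : ℤ) ≤ (4 : ℤ) * k := by
      have : (-3 : ℝ) ≤ (((4 : ℤ) * k : ℤ) : ℝ) := by push_cast at e ⊢; simp only at *; linarith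
      exact_mod_cast this
    omega
  apply OrderIso.ext
  funext x
  have := hk x
  rw [hk0] at this
  simpa using this

/-- lifts of elements of `H` -/
def LiftH (H : Subgroup (AutF n)) : Subgroup (AutF n × (ℝ ≃o ℝ)) :=
  LiftG ρ ⊓ H.comap (MonoidHom.fst _ _)

theorem final_step (hρ : ∀ g : Γ, IsC1Diffeo (ρ g)) (hinj : Function.Injective ρ)
    (H Q : Subgroup (AutF n)) (hH : H ≤ Γ) (hQ : Q ≤ ⁅H, H⁆) (hfg : Q.FG) (hno : NoHom Q)
    (hnt : ∃ q ∈ Q, q ≠ 1) (x0 : ℝ)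
    (hx0 : ∀ g ∈ ⁅(LiftH ρ H).map (MonoidHom.snd _ _), (LiftH ρ H).map (MonoidHom.snd _ _)⁆,
      g x0 = x0) : False := by
  have hfst : (LiftH ρ H).map (MonoidHom.fst _ _) = H := by
    apply le_antisymm
    · rintro _ ⟨p, hp, rfl⟩
      exact hp.2
    · intro h hh
      obtain ⟨F, hF⟩ := LiftG_exists ρ hρ h (hH hh)
      exact ⟨(h, F), ⟨hF, hh⟩, rfl⟩
  have hex : ∀ q : Q, ∃ F, (q.1, F) ∈ LiftG ρ ∧ F x0 = x0 := by
    intro q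
    have h1 := hQ q.2
    rw [← hfst, ← Subgroup.map_commutator] at h1
    obtain ⟨⟨q', F⟩, hp, hpe⟩ := h1
    have hpe' : q' = q.1 := hpe
    subst hpe'
    refine ⟨F, (Subgroup.commutator_le_self _ hp).1, hx0 F ?_⟩
    rw [← Subgroup.map_commutator]
    exact ⟨_, hp, rfl⟩
  choose f hf hfx using hex
  let φ : Q →* (ℝ ≃o ℝ) := MonoidHom.mk' f (fun a b => by
    have h1 := mul_mem (hf a) (hf b)
    rw [Prod.mk_mul_mk] at h1
    obtain ⟨k, hk⟩ := LiftG_unique ρ _ _ _ (hf (a * b)) h1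
    have h2 := hk x0
    have h3 : (f a * f b) x0 = x0 := by
      show f a (f b x0) = x0
      rw [hfx, hfx]
    rw [hfx, h3] at h2
    have hk0 : (k : ℝ) = 0 := by linarith
    apply OrderIso.ext
    funext x
    rw [hk x, hk0, add_zero])
  have hGfg : Group.FG Q := (Group.fg_iff_subgroup_fg _).2 hfg
  obtain ⟨S, hS⟩ := hGfg.out
  have hT := thurston_stab S hS hno φ (fun q => LiftG_C1 ρ hρ q.1 (f q) (hf q)) x0 hfx
  obtain ⟨q, hq, hq1⟩ := hnt
  apply hq1
  obtain ⟨-, h2, h3⟩ := hf ⟨q, hq⟩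
  have : ρ ⟨q, h2⟩ = 1 := by
    apply Equiv.ext
    intro z
    obtain ⟨x, rfl⟩ := QuotientAddGroup.mk_surjective z
    have h4 := h3 x
    have h5 : f ⟨q, hq⟩ x = x := hT ⟨q, hq⟩ x
    rw [h5] at h4
    exact h4
  have h6 := hinj (this.trans (map_one ρ).symm)
  exact congrArg Subtype.val h6

end fin

end helpers

/-- For `n ≥ 8`, if `Γ` is a finite index subgroup of `Aut(Fₙ)`
containing the subgroup `IAₙ` of IA-automorphisms, then any orientation preserving `C¹`
action of `Γ` on the circle cannot be faithful. -/
theorem aut_finite_index_IA_action_not_faithful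
    (n : ℕ) (hn : 8 ≤ n)
    (Γ : Subgroup (AutF n)) [Γ.FiniteIndex] (hIA : IA n ≤ Γ)
    (ρ : Γ →* Equiv.Perm 𝕊) (hρ : ∀ g : Γ, IsC1Diffeo (ρ g)) :
    ¬ Function.Injective ρ := by
  intro hinj
  obtain ⟨Q1, hQ1, fg1, no1, nt1⟩ := block_main hn Γ hIA 0 (by norm_num) _ rfl
  obtain ⟨Q2, hQ2, fg2, no2, nt2⟩ := block_main hn Γ hIA 4 le_rfl _ rfl
  have hd : ∀ i ∈ {m : Fin n | 0 ≤ m.1 ∧ m.1 < 0 + 4},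
      ∀ j ∈ {m : Fin n | 4 ≤ m.1 ∧ m.1 < 4 + 4}, i ≠ j := by
    rintro i ⟨_, h1⟩ j ⟨h2, _⟩ rfl
    omega
  rcases dyn ((LiftH ρ (QQ {m : Fin n | 0 ≤ m.1 ∧ m.1 < 0 + 4} Γ)).map (MonoidHom.snd _ _))
      ((LiftH ρ (QQ {m : Fin n | 4 ≤ m.1 ∧ m.1 < 4 + 4} Γ)).map (MonoidHom.snd _ _))
      (by rintro _ ⟨p, hp, rfl⟩; exact hp.1.1)
      ⟨((1 : AutF n), TT), ⟨LiftG_TT ρ, (QQ {m : Fin n | 0 ≤ m.1 ∧ m.1 < 0 + 4} Γ).one_mem⟩, rfl⟩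
      (by
        rintro _ ⟨p, hp, rfl⟩ _ ⟨q, hq, rfl⟩
        exact LiftG_comm ρ p.1 q.1 (QQ_commute hd _ hp.2 _ hq.2) p.2 q.2 hp.1 hq.1)
    with ⟨x, hx⟩ | ⟨x, hx⟩
  · exact final_step ρ hρ hinj _ Q1 (QQ_le _ _) hQ1 fg1 no1 nt1 x hx
  · exact final_step ρ hρ hinj _ Q2 (QQ_le _ _) hQ2 fg2 no2 nt2 x hx
end
end
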